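/- Let λ ∈ ℂ*, a, a₀, a₁, a₂, b, b₁, b₂ ∈ ℂ with 0 ≤ Re a, Re a₀, Re a₁, Re a₂ < 1 and b₁ b₂ ≠ 0; let B ∈ O_𝔟 be a nontrivial simple 𝔟-module and W ∈ O_𝔚 a nontrivial simple 𝔚-module such that L(W, λ, a, b) is simple. Then the Virasoro modules L(W, λ, a, b), N(B, a₀), L₀(a₁, b₁) and L₁(a₂, b₂) are pairwise non-isomorphic. -/

import Mathlib

/-- A representation of the Witt algebra `𝔚 = span{d_i : i ≥ -1}`, encoded by the family of
operators `d i` (only the indices `i ≥ -1` are relevant) satisfying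
`[d_m, d_n] = (n - m) d_{m+n}`. -/
structure WittRep (W : Type*) [AddCommGroup W] [Module ℂ W] where
  d : ℤ → W →ₗ[ℂ] W
  comm : ∀ m n : ℤ, -1 ≤ m → -1 ≤ n →
    d m ∘ₗ d n - d n ∘ₗ d m = (((n - m : ℤ) : ℂ)) • d (m + n)

namespace WittRep

variable {W : Type*} [AddCommGroup W] [Module ℂ W]

/-- Condition A : the module lies in the category `O_𝔚`. -/
def InO (ρ : WittRep W) : Prop :=
  ∀ v : W, ∃ n : ℕ, ∀ i : ℤ, (n : ℤ) ≤ i → ρ.d i v = 0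

/-- The module is trivial: the Lie algebra acts by zero. -/
def IsTrivial (ρ : WittRep W) : Prop := ∀ i : ℤ, -1 ≤ i → ρ.d i = 0

/-- A `𝔚`-submodule. -/
def Invariant (ρ : WittRep W) (U : Submodule ℂ W) : Prop :=
  ∀ i : ℤ, -1 ≤ i → ∀ u ∈ U, ρ.d i u ∈ U

/-- Simplicity of a `𝔚`-module. -/
def IsSimple (ρ : WittRep W) : Prop :=
  (∃ v : W, v ≠ 0) ∧ ∀ U : Submodule ℂ W, ρ.Invariant U → U = ⊥ ∨ U = ⊤

/-- A `𝔟`-submodule (`𝔟 = span{d_i : i ≥ 0}`). -/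
def BInvariant (ρ : WittRep W) (U : Submodule ℂ W) : Prop :=
  ∀ i : ℤ, 0 ≤ i → ∀ u ∈ U, ρ.d i u ∈ U

/-- The socle `Soc_𝔟(W)`: the sum of the minimal nonzero `𝔟`-submodules. -/
def Soc (ρ : WittRep W) : Submodule ℂ W :=
  sSup {U | ρ.BInvariant U ∧ U ≠ ⊥ ∧
    ∀ U' : Submodule ℂ W, ρ.BInvariant U' → U' ≠ ⊥ → U' ≤ U → U' = U}

/-- `w₀` is a highest weight vector of weight `b'`. -/
def IsHW (ρ : WittRep W) (w₀ : W) (b' : ℂ) : Prop :=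
  w₀ ≠ 0 ∧ ρ.d 0 w₀ = b' • w₀ ∧ ∀ i : ℤ, 1 ≤ i → ρ.d i w₀ = 0

/-- `w₀` generates the `𝔚`-module. -/
def Generates (ρ : WittRep W) (w₀ : W) : Prop :=
  ∀ U : Submodule ℂ W, ρ.Invariant U → w₀ ∈ U → U = ⊤

/-- The operator `e^{kt} d/dt = Σ_{i ≥ 0} (k^i/i!) d_{i-1}` (a finite sum on each vector of a
module in `O_𝔚`). -/
noncomputable def E (ρ : WittRep W) (k : ℤ) (w : W) : W :=
  ∑ᶠ i : ℕ, (((k : ℂ) ^ i) / (Nat.factorial i : ℂ)) • ρ.d ((i : ℤ) - 1) w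

/-- The action of `d_k` on `L(W, λ, a, b) = W ⊗ ℂ[t, t⁻¹]`, realized on `ℤ →₀ W`
(`w ⊗ t^j ↦ Finsupp.single j w`):
`d_k · (w ⊗ t^j) = ((λ^k e^{kt} − 1) d/dt + a + kb + j) w ⊗ t^{k+j}`. -/
noncomputable def Lact (ρ : WittRep W) (lam a b : ℂ) (k : ℤ) (f : ℤ →₀ W) : ℤ →₀ W :=
  f.sum fun j w => Finsupp.single (k + j)
    (lam ^ k • ρ.E k w - ρ.d (-1) w + (a + (k : ℂ) * b + (j : ℂ)) • w)

/-- The PBW map `ℕ →₀ ℂ → W`, `(k, c) ↦ c • d_{-1}^k w₀`. -/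
noncomputable def pbwMap (ρ : WittRep W) (w₀ : W) : (ℕ →₀ ℂ) →ₗ[ℂ] W :=
  Finsupp.lsum ℂ fun k : ℕ => ((ρ.d (-1)) ^ k) ∘ₗ LinearMap.toSpanSingleton ℂ W w₀

/-- `W` is the Verma `𝔚`-module with highest weight vector `w₀` of highest weight `b'`. -/
def IsVerma (ρ : WittRep W) (w₀ : W) (b' : ℂ) : Prop :=
  ρ.d 0 w₀ = b' • w₀ ∧ (∀ i : ℤ, 1 ≤ i → ρ.d i w₀ = 0) ∧
    Function.Bijective (ρ.pbwMap w₀)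

/-- `W^{(n)} = Σ_{i=0}^n d_{-1}^i (Soc_𝔟 W)`. -/
noncomputable def Wn (ρ : WittRep W) (n : ℕ) : Submodule ℂ W :=
  ⨆ i : Fin (n + 1), Submodule.map ((ρ.d (-1)) ^ (i : ℕ)) ρ.Soc

/-- `L₀(a, b') = span{d₁^i · (w₀ ⊗ t^{2j})} ⊆ L(W, -1, a, b' + 1)`. -/
noncomputable def Lzero (ρ : WittRep W) (a b' : ℂ) (w₀ : W) : Submodule ℂ (ℤ →₀ W) :=
  Submodule.span ℂ
    {g | ∃ (i : ℕ) (j : ℤ), g = (ρ.Lact (-1) a (b' + 1) 1)^[i] (Finsupp.single (2 * j) w₀)}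

/-- `L₁(a, b') = span{d₁^i · (w₀ ⊗ t^{2j+1})} ⊆ L(W, -1, a, b' + 1)`. -/
noncomputable def Lone (ρ : WittRep W) (a b' : ℂ) (w₀ : W) : Submodule ℂ (ℤ →₀ W) :=
  Submodule.span ℂ
    {g | ∃ (i : ℕ) (j : ℤ), g = (ρ.Lact (-1) a (b' + 1) 1)^[i] (Finsupp.single (2 * j + 1) w₀)}

end WittRep

/-- A representation of the Lie algebra `𝔟 = span{d_i : i ≥ 0}`. -/
structure BRep (B : Type*) [AddCommGroup B] [Module ℂ B] where
  d : ℕ → B →ₗ[ℂ] B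
  comm : ∀ m n : ℕ, d m ∘ₗ d n - d n ∘ₗ d m = (((n : ℂ) - (m : ℂ))) • d (m + n)

namespace BRep

variable {B : Type*} [AddCommGroup B] [Module ℂ B]

/-- Condition A : the module lies in the category `O_𝔟`. -/
def InO (ρ : BRep B) : Prop := ∀ v : B, ∃ n : ℕ, ∀ i : ℕ, n ≤ i → ρ.d i v = 0

def IsTrivial (ρ : BRep B) : Prop := ∀ i : ℕ, ρ.d i = 0

def IsSimple (ρ : BRep B) : Prop :=
  (∃ v : B, v ≠ 0) ∧
    ∀ U : Submodule ℂ B, (∀ i : ℕ, ∀ u ∈ U, ρ.d i u ∈ U) → U = ⊥ ∨ U = ⊤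

/-- The set of `r ∈ ℤ≥0` such that `d_{r+i} v = 0` for all `i ≥ 1`;
`ord_𝔟(v)` is its least element. -/
def ordSet (ρ : BRep B) (v : B) : Set ℕ := {r : ℕ | ∀ i : ℕ, r + 1 ≤ i → ρ.d i v = 0}

/-- The action of `d_m` on the Virasoro module `N(B_(c), a) = B ⊗ ℂ[t, t⁻¹]`, realized on
`ℤ →₀ B`:  `d_m · (w ⊗ t^j) = (Σ_{i≥1} (m^i/i!) d_{i-1} + mc + a + j) w ⊗ t^{m+j}`
(`c` is the twist of the `d₀`-action; `c = 0` gives `N(B, a)`). -/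
noncomputable def Nact (ρ : BRep B) (a c : ℂ) (m : ℤ) (f : ℤ →₀ B) : ℤ →₀ B :=
  f.sum fun j w => Finsupp.single (m + j)
    ((∑ᶠ i : ℕ, (((m : ℂ) ^ (i + 1)) / (Nat.factorial (i + 1) : ℂ)) • ρ.d i w) +
      ((m : ℂ) * c + a + (j : ℂ)) • w)

end BRep

/-- For a family `U : ℤ → Submodule ℂ W`, the subspace `⊕_j U j ⊗ t^j` of `W ⊗ ℂ[t,t⁻¹]`. -/
def gradedSub {W : Type*} [AddCommGroup W] [Module ℂ W] (U : ℤ → Submodule ℂ W) :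
    Submodule ℂ (ℤ →₀ W) where
  carrier := {f | ∀ j, f j ∈ U j}
  add_mem' := fun hf hg j => by
    simpa only [Finsupp.add_apply] using (U j).add_mem (hf j) (hg j)
  zero_mem' := fun j => by simp
  smul_mem' := fun c f hf j => by
    simpa only [Finsupp.smul_apply] using (U j).smul_mem c (hf j)

/-- A submodule invariant under a (ℤ-indexed) family of operators. -/
def ActInvariant {V : Type*} [AddCommGroup V] [Module ℂ V] (act : ℤ → V → V)
    (M : Submodule ℂ V) : Prop :=
  ∀ k : ℤ, ∀ u ∈ M, act k u ∈ M

/-- Simplicity of the module given by a family of operators (the central element acts by zero). -/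
def ActSimple {V : Type*} [AddCommGroup V] [Module ℂ V] (act : ℤ → V → V) : Prop :=
  (∃ v : V, v ≠ 0) ∧ ∀ M : Submodule ℂ V, ActInvariant act M → M = ⊥ ∨ M = ⊤

/-- A representation of the Virasoro algebra. -/
structure VirasoroRep (V : Type*) [AddCommGroup V] [Module ℂ V] where
  d : ℤ → V →ₗ[ℂ] V
  z : V →ₗ[ℂ] V
  comm : ∀ m n : ℤ, d m ∘ₗ d n - d n ∘ₗ d m =
    (((n - m : ℤ) : ℂ)) • d (m + n) +
      (if m + n = 0 then (((n : ℂ) ^ 3 - (n : ℂ)) / 12) else 0) • z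
  comm_z : ∀ m : ℤ, d m ∘ₗ z = z ∘ₗ d m

/-!
On each vector `v` of `L(W, λ, a, b)` the function `m ↦ d_{-m} d_m v` is an exponential polynomial
with exponents `1`, `λ` and `λ⁻¹`, while on `N(B, a)` it is a polynomial. Exponential polynomials
with disjoint exponents are independent, so an intertwiner identifies the polynomial parts on the
two sides. At `m = 0` the polynomial part on `L(W, λ, a, b)` is `2 M² + d₀² / 2`, where
`M = d/dt - d₀ / 2`; if the other exponents are absent it equals `d₀²`, and `4 M² = d₀²` forces
`d/dt`, hence `𝔚`, to act by zero.

For `λ = -1` an intertwiner therefore commutes with `d₀` and `M²`. When `w₀` is a highest weight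
vector of nonzero weight, `p ↦ p(M) (w₀ ⊗ t^j)` is injective on `ℂ[X]`, and `L_ε` consists of the
vectors with `p` of the parity of `j - ε`. On a weight space of `L_ε` with `p` even, `M²` is
multiplication by `X²` and has no square root, whereas `M` is one on `L(W, -1, a, b)`. Finally `d₁`
raises the degree of `p` by one, so an isomorphism between `L₀` and `L₁`, which must shift the
parity of weights, cannot reach the vectors with `p` constant.
-/

open Polynomial

/-- The space of functions `ℤ → V` that are polynomial in the integer variable. -/
def polyFun (V : Type*) [AddCommGroup V] [Module ℂ V] : Submodule ℂ (ℤ → V) :=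
  Submodule.span ℂ {f | ∃ (i : ℕ) (v : V), f = fun m : ℤ => (m : ℂ) ^ i • v}

/-- The space of exponential polynomials `m ↦ Σ_{μ ∈ s} μ ^ m • p_μ m` with exponents in `s`,
encoded by generalized eigenvectors of the shift operator so that different exponents are
independent by general theory. -/
noncomputable def expPoly (V : Type*) [AddCommGroup V] [Module ℂ V] (s : Set ℂ) :
    Submodule ℂ (ℤ → V) :=
  ⨆ μ ∈ s, Module.End.maxGenEigenspace (LinearMap.funLeft ℂ V (· + 1)) μ

section ExpPoly

variable {V V' : Type*} [AddCommGroup V] [Module ℂ V] [AddCommGroup V'] [Module ℂ V']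

theorem apply_mem_of_mem_polyFun (T : ℤ → V →ₗ[ℂ] V') {S : Submodule ℂ (ℤ → V')}
    (hT : ∀ (i : ℕ) (v : V), (fun m : ℤ => T m ((m : ℂ) ^ i • v)) ∈ S) {f : ℤ → V}
    (hf : f ∈ polyFun V) : (fun m => T m (f m)) ∈ S := by
  have hle : polyFun V ≤ S.comap (LinearMap.pi fun m => T m ∘ₗ LinearMap.proj m) := by
    refine Submodule.span_le.2 ?_
    rintro _ ⟨i, v, rfl⟩
    exact hT i v
  exact hle hf

theorem pow_smul_mem_polyFun (i : ℕ) {f : ℤ → V} (hf : f ∈ polyFun V) :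
    (fun m : ℤ => (m : ℂ) ^ i • f m) ∈ polyFun V :=
  apply_mem_of_mem_polyFun (S := polyFun V) (fun m => (m : ℂ) ^ i • LinearMap.id) (fun j v =>
    Submodule.subset_span ⟨j + i, v, by simp [smul_smul, pow_add]⟩) hf

theorem const_mem_polyFun (v : V) : (fun _ : ℤ => v) ∈ polyFun V :=
  Submodule.subset_span ⟨0, v, by simp⟩

theorem map_mem_polyFun (T : V →ₗ[ℂ] V') {f : ℤ → V} (hf : f ∈ polyFun V) :
    (fun m => T (f m)) ∈ polyFun V' :=
  apply_mem_of_mem_polyFun (fun _ => T)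
    (fun i v => by
      simpa only [map_smul] using pow_smul_mem_polyFun i (const_mem_polyFun (T v))) hf

theorem comp_neg_mem_polyFun {f : ℤ → V} (hf : f ∈ polyFun V) :
    (fun m => f (-m)) ∈ polyFun V := by
  induction hf using Submodule.span_induction with
  | mem _ h =>
    obtain ⟨i, v, rfl⟩ := h
    exact Submodule.subset_span ⟨i, (-1 : ℂ) ^ i • v, by
      simp only [smul_smul, ← mul_pow, Int.cast_neg, mul_neg_one]⟩
  | zero => exact (polyFun V).zero_mem
  | add f g _ _ hf hg => exact add_mem hf hg
  | smul c f _ hf => exact (polyFun V).smul_mem c hf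

theorem mem_maxGenEigenspace_of_sub_smul_mem {R M : Type*} [CommRing R] [AddCommGroup M]
    [Module R M] {T : Module.End R M} {μ : R} {x : M}
    (h : T x - μ • x ∈ T.maxGenEigenspace μ) : x ∈ T.maxGenEigenspace μ := by
  rw [Module.End.mem_maxGenEigenspace] at h ⊢
  obtain ⟨n, hn⟩ := h
  exact ⟨n + 1, by simpa [pow_succ] using hn⟩

theorem zpow_smul_pow_smul_mem_maxGenEigenspace {c : ℂ} (hc : c ≠ 0) (i : ℕ) (v : V) :
    (fun m : ℤ => c ^ m • (m : ℂ) ^ i • v) ∈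
      Module.End.maxGenEigenspace (LinearMap.funLeft ℂ V (· + 1)) c := by
  induction i using Nat.strong_induction_on with
  | _ i ih =>
    refine mem_maxGenEigenspace_of_sub_smul_mem ?_
    convert Submodule.sum_mem _ fun j (hj : j ∈ Finset.range i) =>
      Submodule.smul_mem _ (c * i.choose j : ℂ) (ih j (Finset.mem_range.1 hj)) using 1
    ext m
    simp only [Pi.sub_apply, Pi.smul_apply, Finset.sum_apply, LinearMap.funLeft_apply,
      Int.cast_add, Int.cast_one, zpow_add₀ hc, zpow_one, smul_smul, ← Finset.sum_smul,
      ← sub_smul, add_pow, one_pow, mul_one, Finset.sum_range_succ, Nat.choose_self,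
      Nat.cast_one, mul_add, Finset.mul_sum]
    congr 1
    rw [← mul_assoc, mul_comm c, add_sub_cancel_right]
    exact Finset.sum_congr rfl fun j _ => by ring

theorem zpow_smul_mem_expPoly {c : ℂ} (hc : c ≠ 0) {s : Set ℂ} (hcs : c ∈ s) {f : ℤ → V}
    (hf : f ∈ polyFun V) : (fun m : ℤ => c ^ m • f m) ∈ expPoly V s :=
  apply_mem_of_mem_polyFun (S := expPoly V s) (fun m => c ^ m • LinearMap.id) (fun i v =>
    Submodule.mem_iSup_of_mem c (Submodule.mem_iSup_of_mem hcs
      (zpow_smul_pow_smul_mem_maxGenEigenspace hc i v))) hf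

theorem polyFun_le_expPoly {s : Set ℂ} (hs : 1 ∈ s) : polyFun V ≤ expPoly V s := fun f hf => by
  simpa using zpow_smul_mem_expPoly one_ne_zero hs hf

theorem disjoint_expPoly {s t : Set ℂ} (h : Disjoint s t) :
    Disjoint (expPoly V s) (expPoly V t) :=
  (Module.End.independent_maxGenEigenspace _).disjoint_biSup_biSup h

/-- The algebra of sequences of operators on `V` that depend pointwise polynomially on the
index; the degree may be unbounded as the vector varies. -/
def polyEnd (V : Type*) [AddCommGroup V] [Module ℂ V] : Subalgebra ℂ (ℤ → Module.End ℂ V) where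
  carrier := {T | ∀ v, (fun m => T m v) ∈ polyFun V}
  mul_mem' {S} _ hS hT v :=
    apply_mem_of_mem_polyFun S (fun i w => by
      simpa only [map_smul] using pow_smul_mem_polyFun i (hS w)) (hT v)
  add_mem' hS hT v := add_mem (hS v) (hT v)
  algebraMap_mem' c v := const_mem_polyFun (c • v)

theorem const_mem_polyEnd (T : Module.End ℂ V) : (fun _ => T) ∈ polyEnd V :=
  fun v => const_mem_polyFun (T v)

theorem comp_neg_mem_polyEnd {T : ℤ → Module.End ℂ V} (hT : T ∈ polyEnd V) :
    (fun m => T (-m)) ∈ polyEnd V := fun v => comp_neg_mem_polyFun (hT v)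

theorem intCast_mem_polyEnd : (fun m : ℤ => (m : Module.End ℂ V)) ∈ polyEnd V := fun v => by
  simpa [Int.cast_smul_eq_zsmul] using pow_smul_mem_polyFun 1 (const_mem_polyFun v)

end ExpPoly

section ExpSeries

variable {V : Type*} [AddCommGroup V] [Module ℂ V] {e : ℕ → Module.End ℂ V}

theorem support_smul_apply_finite (he : ∀ w, ∃ n : ℕ, ∀ i, n ≤ i → e i w = 0) (c : ℕ → ℂ)
    (w : V) : (Function.support fun i => c i • e i w).Finite := by
  obtain ⟨n, hn⟩ := he w
  refine (Finset.range n).finite_toSet.subset fun i hi => ?_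
  contrapose! hi
  simp [hn i (by simpa using hi)]

/-- The operator `Σ_i (k^(i+r)/(i+r)!) e_i` attached to a locally nilpotent sequence of
operators `e`; `𝔚`-modules use `r = 0` and `𝔟`-modules use `r = 1`. -/
noncomputable def expSeries (he : ∀ w, ∃ n : ℕ, ∀ i, n ≤ i → e i w = 0) (r : ℕ) (k : ℤ) :
    Module.End ℂ V where
  toFun w := ∑ᶠ i : ℕ, (((k : ℂ) ^ (i + r)) / (Nat.factorial (i + r) : ℂ)) • e i w
  map_add' v w := by
    simp only [map_add, smul_add]
    exact finsum_add_distrib (support_smul_apply_finite he _ v) (support_smul_apply_finite he _ w)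
  map_smul' c v := by
    simp only [map_smul, smul_comm _ c, RingHom.id_apply]
    exact (smul_finsum c _).symm

theorem expSeries_apply_eq_sum (he : ∀ w, ∃ n : ℕ, ∀ i, n ≤ i → e i w = 0) (r : ℕ) (k : ℤ)
    {w : V} {n : ℕ} (hn : ∀ i, n ≤ i → e i w = 0) :
    expSeries he r k w = ∑ i ∈ Finset.range n,
      (((k : ℂ) ^ (i + r)) / (Nat.factorial (i + r) : ℂ)) • e i w := by
  refine finsum_eq_sum_of_support_subset _ fun i hi => ?_
  contrapose! hi
  simp [hn i (by simpa using hi)]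

theorem expSeries_mem_polyEnd (he : ∀ w, ∃ n : ℕ, ∀ i, n ≤ i → e i w = 0) (r : ℕ) :
    expSeries he r ∈ polyEnd V := fun w => by
  obtain ⟨n, hn⟩ := he w
  simp only [expSeries_apply_eq_sum he r _ hn]
  convert Submodule.sum_mem _ fun i (_ : i ∈ Finset.range n) => pow_smul_mem_polyFun (i + r)
    (const_mem_polyFun ((Nat.factorial (i + r) : ℂ)⁻¹ • e i w)) using 1
  ext m
  simp only [Finset.sum_apply, smul_smul, div_eq_mul_inv]

end ExpSeries

section GradedOperators

variable {W : Type*} [AddCommGroup W] [Module ℂ W]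

/-- The action of `End W` on `W ⊗ ℂ[t, t⁻¹]` through the first factor. -/
noncomputable def coeffEnd (W : Type*) [AddCommGroup W] [Module ℂ W] :
    Module.End ℂ W →ₐ[ℂ] Module.End ℂ (ℤ →₀ W) :=
  AlgHom.ofLinearMap
    { toFun := Finsupp.mapRange.linearMap
      map_add' := fun S T => by ext; simp
      map_smul' := fun c T => by ext; simp }
    (by ext; simp) (fun S T => by ext; simp)

/-- The degree operator `w ⊗ t^j ↦ (a + j) w ⊗ t^j`. -/
noncomputable def degreeEnd (W : Type*) [AddCommGroup W] [Module ℂ W] (a : ℂ) :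
    Module.End ℂ (ℤ →₀ W) :=
  Finsupp.lsum ℂ fun j : ℤ => (a + (j : ℂ)) • Finsupp.lsingle j

/-- Multiplication by `t^k`. -/
noncomputable def tShift (W : Type*) [AddCommGroup W] [Module ℂ W] (k : ℤ) :
    Module.End ℂ (ℤ →₀ W) :=
  Finsupp.lmapDomain W ℂ (k + ·)

@[simp]
theorem coeffEnd_single (T : Module.End ℂ W) (j : ℤ) (w : W) :
    coeffEnd W T (Finsupp.single j w) = Finsupp.single j (T w) :=
  Finsupp.mapRange_single (hf := map_zero T)

@[simp]
theorem degreeEnd_single (a : ℂ) (j : ℤ) (w : W) :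
    degreeEnd W a (Finsupp.single j w) = (a + (j : ℂ)) • Finsupp.single j w := by
  simp [degreeEnd]

theorem degreeEnd_apply (a : ℂ) (f : ℤ →₀ W) (j : ℤ) :
    degreeEnd W a f j = (a + (j : ℂ)) • f j := by
  induction f using Finsupp.induction_linear with
  | zero => simp
  | add f g hf hg => simp [hf, hg]
  | single i w => by_cases h : i = j <;> simp [h]

theorem eq_add_of_degreeEnd_eq {a c : ℂ} {f : ℤ →₀ W} (h : degreeEnd W a f = c • f) {j : ℤ}
    (hj : f j ≠ 0) : c = a + j :=
  smul_left_injective ℂ hj (by simpa only [degreeEnd_apply, Finsupp.smul_apply] using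
    (DFunLike.congr_fun h j).symm)

@[simp]
theorem tShift_single (k j : ℤ) (w : W) :
    tShift W k (Finsupp.single j w) = Finsupp.single (k + j) w :=
  Finsupp.mapDomain_single

theorem tShift_neg_mul_tShift (k : ℤ) : tShift W (-k) * tShift W k = 1 := by
  ext j w : 2
  simp

theorem tShift_zero : tShift W 0 = 1 := by
  ext j w : 2
  simp

theorem commute_coeffEnd_degreeEnd (T : Module.End ℂ W) (a : ℂ) :
    Commute (coeffEnd W T) (degreeEnd W a) := by
  ext j w : 2
  simp

theorem commute_coeffEnd_tShift (T : Module.End ℂ W) (k : ℤ) :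
    Commute (coeffEnd W T) (tShift W k) := by
  ext j w : 2
  simp

theorem degreeEnd_mul_tShift (a : ℂ) (k : ℤ) :
    degreeEnd W a * tShift W k = tShift W k * (degreeEnd W a + (k : Module.End ℂ (ℤ →₀ W))) := by
  ext j w : 2
  simp only [LinearMap.comp_apply, Finsupp.lsingle_apply, Module.End.mul_apply, tShift_single,
    degreeEnd_single, LinearMap.add_apply, Module.End.intCast_apply, ← Int.cast_smul_eq_zsmul ℂ,
    map_add, map_smul, Int.cast_add]
  module

theorem coeffEnd_mem_polyEnd {T : ℤ → Module.End ℂ W} (hT : T ∈ polyEnd W) :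
    (fun m => coeffEnd W (T m)) ∈ polyEnd (ℤ →₀ W) := fun f => by
  induction f using Finsupp.induction_linear with
  | zero => simpa only [map_zero] using const_mem_polyFun (0 : ℤ →₀ W)
  | add f g hf hg =>
    simp only [map_add]
    exact add_mem hf hg
  | single j w =>
    simp only [coeffEnd_single]
    exact map_mem_polyFun (Finsupp.lsingle j) (hT w)

/-- The operator `w ⊗ t^j ↦ (T + a + j) w ⊗ t^{k+j}`, the common shape of the action of `d_k` on
`L(W, λ, a, b)` and `N(B, a)`. -/
noncomputable def gradedEnd (a : ℂ) (T : Module.End ℂ W) (k : ℤ) : Module.End ℂ (ℤ →₀ W) :=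
  tShift W k * (coeffEnd W T + degreeEnd W a)

theorem gradedEnd_single (a : ℂ) (T : Module.End ℂ W) (k j : ℤ) (w : W) :
    gradedEnd a T k (Finsupp.single j w) = Finsupp.single (k + j) (T w + (a + (j : ℂ)) • w) := by
  simp [gradedEnd]

theorem gradedEnd_zero (a : ℂ) : gradedEnd a (0 : Module.End ℂ W) 0 = degreeEnd W a := by
  rw [gradedEnd, tShift_zero, map_zero, zero_add, one_mul]

theorem gradedEnd_neg_mul_gradedEnd (a : ℂ) (S T : Module.End ℂ W) (m : ℤ) :
    gradedEnd a S (-m) * gradedEnd a T m =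
      (coeffEnd W S + degreeEnd W a + (m : Module.End ℂ (ℤ →₀ W))) *
        (coeffEnd W T + degreeEnd W a) := by
  have hcomm : (coeffEnd W S + degreeEnd W a) * tShift W m =
      tShift W m * (coeffEnd W S + degreeEnd W a + (m : Module.End ℂ (ℤ →₀ W))) := by
    rw [add_mul, (commute_coeffEnd_tShift S m).eq, degreeEnd_mul_tShift, ← mul_add, add_assoc]
  rw [gradedEnd, gradedEnd, mul_assoc, ← mul_assoc _ (tShift W m), hcomm, ← mul_assoc,
    ← mul_assoc, tShift_neg_mul_tShift, one_mul]

end GradedOperators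

namespace WittRep

variable {W : Type*} [AddCommGroup W] [Module ℂ W] {ρ : WittRep W}

theorem InO.locallyFinite (hO : ρ.InO) (w : W) :
    ∃ n : ℕ, ∀ i : ℕ, n ≤ i → ρ.d ((i : ℤ) - 1) w = 0 := by
  obtain ⟨n, hn⟩ := hO w
  exact ⟨n + 1, fun i hi => hn _ (by omega)⟩

/-- The operator `e^{kt} d/dt` as a linear map, on a module in `O_𝔚`. -/
noncomputable def InO.EEnd (hO : ρ.InO) (k : ℤ) : Module.End ℂ W :=
  expSeries hO.locallyFinite 0 k

theorem InO.EEnd_apply (hO : ρ.InO) (k : ℤ) (w : W) : hO.EEnd k w = ρ.E k w := rfl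

theorem InO.EEnd_mem_polyEnd (hO : ρ.InO) : hO.EEnd ∈ polyEnd W :=
  expSeries_mem_polyEnd hO.locallyFinite 0

theorem InO.EEnd_zero (hO : ρ.InO) : hO.EEnd 0 = ρ.d (-1) := by
  ext w
  rw [hO.EEnd_apply, E, finsum_eq_single _ 0 fun i hi => by simp [hi]]
  simp

/-- The action of `d_k` on `L(W, λ, a, b)` as a linear map. -/
noncomputable def InO.LEnd (hO : ρ.InO) (lam a b : ℂ) (k : ℤ) : Module.End ℂ (ℤ →₀ W) :=
  gradedEnd a (lam ^ k • hO.EEnd k - ρ.d (-1) + b • (k : Module.End ℂ W)) k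

theorem InO.LEnd_apply (hO : ρ.InO) (lam a b : ℂ) (k : ℤ) (f : ℤ →₀ W) :
    hO.LEnd lam a b k f = ρ.Lact lam a b k f := by
  conv_lhs => rw [← f.sum_single, map_finsuppSum]
  refine Finsupp.sum_congr fun j _ => ?_
  rw [LEnd, gradedEnd_single]
  congr 1
  simp only [LinearMap.add_apply, LinearMap.sub_apply, LinearMap.smul_apply, hO.EEnd_apply,
    Module.End.intCast_apply, ← Int.cast_smul_eq_zsmul ℂ]
  module

theorem InO.LEnd_zero (hO : ρ.InO) (lam a b : ℂ) : hO.LEnd lam a b 0 = degreeEnd W a := by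
  rw [LEnd, hO.EEnd_zero, zpow_zero, one_smul, sub_self, Int.cast_zero, smul_zero, add_zero,
    gradedEnd_zero]

/-- The operator `d/dt - d₀ / 2` on `W ⊗ ℂ[t, t⁻¹]`. Completing the square with it diagonalizes
the polynomial part of `m ↦ d_{-m} d_m` on `L(W, λ, a, b)`. -/
noncomputable def centeredD (ρ : WittRep W) (a : ℂ) : Module.End ℂ (ℤ →₀ W) :=
  coeffEnd W (ρ.d (-1)) - (1 / 2 : ℂ) • degreeEnd W a

theorem InO.exists_LEnd_neg_mul_LEnd (hO : ρ.InO) {lam : ℂ} (hlam : lam ≠ 0) (a b : ℂ) :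
    ∃ P ∈ polyEnd (ℤ →₀ W), ∃ Q ∈ polyEnd (ℤ →₀ W), ∃ R ∈ polyEnd (ℤ →₀ W),
      (∀ m : ℤ, hO.LEnd lam a b (-m) * hO.LEnd lam a b m =
        P m + lam ^ m • Q m + lam⁻¹ ^ m • R m) ∧
      P 0 = (2 : ℂ) • ρ.centeredD a ^ 2 + (1 / 2 : ℂ) • degreeEnd W a ^ 2 := by
  let E : ℤ → Module.End ℂ (ℤ →₀ W) := fun m => coeffEnd W (hO.EEnd m)
  let B : ℤ → Module.End ℂ (ℤ →₀ W) := fun m =>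
    degreeEnd W a - coeffEnd W (ρ.d (-1)) + b • (m : Module.End ℂ (ℤ →₀ W))
  have hE : E ∈ polyEnd (ℤ →₀ W) := coeffEnd_mem_polyEnd hO.EEnd_mem_polyEnd
  have hB : B ∈ polyEnd (ℤ →₀ W) := add_mem (const_mem_polyEnd _)
    ((polyEnd _).smul_mem intCast_mem_polyEnd b)
  have hE' := comp_neg_mem_polyEnd hE
  have hB' := add_mem (comp_neg_mem_polyEnd hB) intCast_mem_polyEnd
  refine ⟨_, add_mem (mul_mem hE' hE) (mul_mem hB' hB), _, mul_mem hB' hE, _, mul_mem hE' hB,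
    fun m => ?_, ?_⟩
  · have hl : lam⁻¹ ^ m * lam ^ m = 1 := by
      rw [← mul_zpow, inv_mul_cancel₀ hlam, one_zpow]
    have hfst : coeffEnd W (lam ^ m • hO.EEnd m - ρ.d (-1) + b • (m : Module.End ℂ W)) +
        degreeEnd W a = lam ^ m • E m + B m := by
      simp only [map_add, map_sub, map_smul, map_intCast, E, B]
      abel
    have hsnd : coeffEnd W (lam ^ (-m) • hO.EEnd (-m) - ρ.d (-1) +
        b • ((-m : ℤ) : Module.End ℂ W)) + degreeEnd W a + (m : Module.End ℂ (ℤ →₀ W)) =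
        lam⁻¹ ^ m • E (-m) + (B (-m) + (m : Module.End ℂ (ℤ →₀ W))) := by
      simp only [map_add, map_sub, map_smul, map_intCast, E, B, zpow_neg, inv_zpow]
      abel
    rw [LEnd, LEnd, gradedEnd_neg_mul_gradedEnd, hfst, hsnd]
    simp only [add_mul, mul_add, smul_mul_assoc, mul_smul_comm, smul_smul, hl, one_smul,
      Pi.add_apply, Pi.mul_apply, mul_comm (lam ^ m), smul_add]
    abel
  · have hc := (commute_coeffEnd_degreeEnd (ρ.d (-1)) a).eq
    simp only [Pi.add_apply, Pi.mul_apply, E, B, neg_zero, hO.EEnd_zero, Int.cast_zero, smul_zero,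
      add_zero, centeredD, pow_two, sub_mul, mul_sub, smul_mul_assoc, mul_smul_comm, hc]
    module

theorem InO.LEnd_neg_mul_LEnd_mem_expPoly (hO : ρ.InO) {lam : ℂ} (hlam : lam ≠ 0) (a b : ℂ)
    (v : ℤ →₀ W) :
    (fun m : ℤ => (hO.LEnd lam a b (-m) * hO.LEnd lam a b m) v) ∈
      expPoly (ℤ →₀ W) {1, lam, lam⁻¹} := by
  obtain ⟨P, hP, Q, hQ, R, hR, hPQR, -⟩ := hO.exists_LEnd_neg_mul_LEnd hlam a b
  simp only [hPQR]
  exact add_mem (add_mem (polyFun_le_expPoly (by simp) (hP v))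
    (zpow_smul_mem_expPoly hlam (by simp) (hQ v)))
    (zpow_smul_mem_expPoly (inv_ne_zero hlam) (by simp) (hR v))

end WittRep

namespace BRep

variable {B : Type*} [AddCommGroup B] [Module ℂ B] {ρ : BRep B}

/-- The action of `d_m` on `N(B, a)`, with `d₀` twisted by `c`, as a linear map. -/
noncomputable def InO.NEnd (hO : ρ.InO) (a c : ℂ) (m : ℤ) : Module.End ℂ (ℤ →₀ B) :=
  gradedEnd a (expSeries hO 1 m + c • (m : Module.End ℂ B)) m

theorem InO.NEnd_apply (hO : ρ.InO) (a c : ℂ) (m : ℤ) (f : ℤ →₀ B) :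
    hO.NEnd a c m f = ρ.Nact a c m f := by
  conv_lhs => rw [← f.sum_single, map_finsuppSum]
  refine Finsupp.sum_congr fun j _ => ?_
  rw [NEnd, gradedEnd_single]
  congr 1
  simp only [LinearMap.add_apply, LinearMap.smul_apply, expSeries, LinearMap.coe_mk,
    AddHom.coe_mk, Module.End.intCast_apply, ← Int.cast_smul_eq_zsmul ℂ]
  module

theorem InO.NEnd_neg_mul_NEnd_mem_polyEnd (hO : ρ.InO) (a c : ℂ) :
    (fun m : ℤ => hO.NEnd a c (-m) * hO.NEnd a c m) ∈ polyEnd (ℤ →₀ B) := by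
  have hT := add_mem (coeffEnd_mem_polyEnd (add_mem (expSeries_mem_polyEnd hO 1)
    ((polyEnd B).smul_mem intCast_mem_polyEnd c))) (const_mem_polyEnd (degreeEnd B a))
  simp only [NEnd, gradedEnd_neg_mul_gradedEnd]
  exact mul_mem (add_mem (comp_neg_mem_polyEnd hT) intCast_mem_polyEnd) hT

end BRep

namespace WittRep

variable {W W' V : Type*} [AddCommGroup W] [Module ℂ W] [AddCommGroup W'] [Module ℂ W']
  [AddCommGroup V] [Module ℂ V] {ρ : WittRep W} {ρ' : WittRep W'}

theorem centeredD_single (a : ℂ) (j : ℤ) (w : W) :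
    ρ.centeredD a (Finsupp.single j w) =
      Finsupp.single j (ρ.d (-1) w - ((a + (j : ℂ)) / 2) • w) := by
  simp [centeredD, smul_smul, div_eq_inv_mul]

theorem d_eq_zero_of_commute {i : ℤ} (hi : -1 ≤ i) (h : Commute (ρ.d (-1)) (ρ.d (i + 1))) :
    ρ.d i = 0 := by
  have hc := ρ.comm (-1) (i + 1) le_rfl (by omega)
  rw [← Module.End.mul_eq_comp, ← Module.End.mul_eq_comp, h.eq, sub_self,
    neg_add_cancel_comm_assoc] at hc
  refine (smul_eq_zero.1 hc.symm).resolve_left ?_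
  exact_mod_cast (by omega : i + 1 - -1 ≠ 0)

theorem InO.four_smul_centeredD_sq_apply (hO : ρ.InO) {lam : ℂ} (hlam : lam ≠ 0) (a b : ℂ)
    {Ψ : (ℤ →₀ W) →ₗ[ℂ] V} (hΨ : Function.Injective Ψ) {s : Set ℂ} (h1 : 1 ∈ s) (hs : lam ∉ s)
    (hs' : lam⁻¹ ∉ s) {v : ℤ →₀ W}
    (h : (fun m : ℤ => Ψ ((hO.LEnd lam a b (-m) * hO.LEnd lam a b m) v)) ∈ expPoly V s) :
    (4 : ℂ) • (ρ.centeredD a ^ 2) v = (degreeEnd W a ^ 2) v := by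
  obtain ⟨P, hP, Q, hQ, R, hR, hPQR, hP0⟩ := hO.exists_LEnd_neg_mul_LEnd hlam a b
  have hQR : (fun m : ℤ => lam ^ m • Ψ (Q m v)) + (fun m : ℤ => lam⁻¹ ^ m • Ψ (R m v)) = 0 := by
    have hdisj : Disjoint s {lam, lam⁻¹} := by simp [hs, hs']
    refine Submodule.disjoint_def.1 (disjoint_expPoly hdisj) _ ?_ (add_mem
      (zpow_smul_mem_expPoly hlam (by simp) (map_mem_polyFun Ψ (hQ v)))
      (zpow_smul_mem_expPoly (inv_ne_zero hlam) (by simp) (map_mem_polyFun Ψ (hR v))))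
    convert sub_mem h (polyFun_le_expPoly h1 (map_mem_polyFun Ψ (hP v))) using 1
    ext m
    simp [hPQR, add_assoc]
  have h0 : Q 0 v + R 0 v = 0 := hΨ (by simpa using congrFun hQR 0)
  have hA := LinearMap.congr_fun (hPQR 0) v
  simp only [neg_zero, hO.LEnd_zero, zpow_zero, one_smul, hP0, LinearMap.add_apply,
    LinearMap.smul_apply, add_assoc, h0, ← pow_two] at hA
  linear_combination (norm := module) (-2 : ℂ) • hA

theorem InO.isTrivial_of_mem_expPoly (hO : ρ.InO) {lam : ℂ} (hlam : lam ≠ 0) (a b : ℂ)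
    {Ψ : (ℤ →₀ W) →ₗ[ℂ] V} (hΨ : Function.Injective Ψ) {s : Set ℂ} (h1 : 1 ∈ s) (hs : lam ∉ s)
    (hs' : lam⁻¹ ∉ s)
    (h : ∀ v, (fun m : ℤ => Ψ ((hO.LEnd lam a b (-m) * hO.LEnd lam a b m) v)) ∈ expPoly V s) :
    ρ.IsTrivial := by
  have hsq (j : ℤ) (w : W) : ρ.d (-1) (ρ.d (-1) w) = (a + j) • ρ.d (-1) w := by
    have hj := hO.four_smul_centeredD_sq_apply hlam a b hΨ h1 hs hs' (h (Finsupp.single j w))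
    simp only [pow_two, Module.End.mul_apply, centeredD_single, degreeEnd_single,
      Finsupp.smul_single] at hj
    have hj' := Finsupp.single_injective j hj
    simp only [map_sub, map_smul] at hj'
    linear_combination (norm := module) (1 / 4 : ℂ) • hj'
  suffices hD : ρ.d (-1) = 0 from fun i hi => d_eq_zero_of_commute hi (hD ▸ Commute.zero_left _)
  ext w
  have h₀ := hsq 0 w
  have h₁ := hsq 1 w
  push_cast at h₀ h₁
  rw [LinearMap.zero_apply]
  linear_combination (norm := module) h₀ - h₁

theorem InO.map_centeredD_sq (hO : ρ.InO) (hO' : ρ'.InO) {a b a' b' : ℂ}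
    (Ψ : (ℤ →₀ W) →ₗ[ℂ] (ℤ →₀ W')) (v : ℤ →₀ W)
    (h : ∀ m : ℤ, Ψ ((hO.LEnd (-1) a b (-m) * hO.LEnd (-1) a b m) v) =
      (hO'.LEnd (-1) a' b' (-m) * hO'.LEnd (-1) a' b' m) (Ψ v)) :
    Ψ ((ρ.centeredD a ^ 2) v) = (ρ'.centeredD a' ^ 2) (Ψ v) := by
  have hneg : (-1 : ℂ) ≠ 0 := by norm_num
  obtain ⟨P, hP, Q, hQ, R, hR, hPQR, hP0⟩ := hO.exists_LEnd_neg_mul_LEnd hneg a b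
  obtain ⟨P', hP', Q', hQ', R', hR', hPQR', hP0'⟩ := hO'.exists_LEnd_neg_mul_LEnd hneg a' b'
  have hPP' : (fun m : ℤ => Ψ (P m v)) - (fun m : ℤ => P' m (Ψ v)) = 0 := by
    have hdisj : Disjoint ({1} : Set ℂ) {-1} := by norm_num
    have hodd : (fun m : ℤ => (-1 : ℂ) ^ m • (Q' m (Ψ v) + R' m (Ψ v) - Ψ (Q m v + R m v))) ∈
        expPoly (ℤ →₀ W') {-1} :=
      zpow_smul_mem_expPoly hneg (Set.mem_singleton _) (sub_mem (add_mem (hQ' _) (hR' _))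
        (map_mem_polyFun Ψ (add_mem (hQ v) (hR v))))
    refine Submodule.disjoint_def.1 (disjoint_expPoly hdisj) _
      (polyFun_le_expPoly (Set.mem_singleton _) (sub_mem (map_mem_polyFun Ψ (hP v)) (hP' _))) ?_
    convert hodd using 1
    ext1 m
    have hm := h m
    simp only [hPQR, hPQR', inv_neg, inv_one, map_add, map_smul, LinearMap.add_apply,
      LinearMap.smul_apply] at hm
    simp only [Pi.sub_apply, map_add]
    linear_combination (norm := module) hm
  have hP0v : Ψ (P 0 v) = P' 0 (Ψ v) := sub_eq_zero.1 (congrFun hPP' 0)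
  have h0 := h 0
  simp only [neg_zero, hO.LEnd_zero, hO'.LEnd_zero, ← pow_two] at h0
  simp only [hP0, hP0', LinearMap.add_apply, LinearMap.smul_apply, map_add, map_smul, h0] at hP0v
  linear_combination (norm := module) (1 / 2 : ℂ) • hP0v

end WittRep

section ActSimpleOne

theorem single_mem_gradedSub_const {W : Type*} [AddCommGroup W] [Module ℂ W]
    {U : Submodule ℂ W} {j : ℤ} {w : W} :
    Finsupp.single j w ∈ gradedSub (fun _ => U) ↔ w ∈ U := by
  refine ⟨fun h => by simpa using h j, fun h i => ?_⟩
  rw [Finsupp.single_apply]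
  split_ifs
  exacts [h, U.zero_mem]

namespace WittRep

variable {W : Type*} [AddCommGroup W] [Module ℂ W] {ρ : WittRep W}

theorem BInvariant.EEnd_sub_mem {U : Submodule ℂ W} (hU : ρ.BInvariant U) (hO : ρ.InO) (k : ℤ)
    {u : W} (hu : u ∈ U) : hO.EEnd k u - ρ.d (-1) u ∈ U := by
  obtain ⟨n, hn⟩ := hO.locallyFinite u
  rw [InO.EEnd, expSeries_apply_eq_sum _ 0 k fun i (hi : n + 1 ≤ i) => hn i (by omega),
    Finset.sum_range_succ']
  simp only [add_zero, pow_zero, Nat.factorial_zero, Nat.cast_one, div_one, one_smul,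
    Nat.cast_zero, zero_sub, add_sub_cancel_right]
  exact U.sum_mem fun i _ => U.smul_mem _ (hU _ (by simp) _ hu)

theorem BInvariant.actInvariant_gradedSub {U : Submodule ℂ W} (hU : ρ.BInvariant U)
    (hO : ρ.InO) (a b : ℂ) : ActInvariant (ρ.Lact 1 a b) (gradedSub fun _ => U) := by
  refine fun k f hf => Submodule.sum_mem _ fun j _ => single_mem_gradedSub_const.2 ?_
  rw [one_zpow, one_smul, ← hO.EEnd_apply]
  exact add_mem (hU.EEnd_sub_mem hO k (hf j)) (U.smul_mem _ (hf j))

theorem BInvariant.eq_bot_or_eq_top {U : Submodule ℂ W} (hU : ρ.BInvariant U) (hO : ρ.InO)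
    {a b : ℂ} (hL : ActSimple (ρ.Lact 1 a b)) : U = ⊥ ∨ U = ⊤ := by
  refine (hL.2 _ (hU.actInvariant_gradedSub hO a b)).imp (fun h => ?_) fun h => ?_
  · refine (Submodule.eq_bot_iff _).2 fun u hu => ?_
    simpa [h] using single_mem_gradedSub_const (j := 0).2 hu
  · exact Submodule.eq_top_iff'.2 fun w => single_mem_gradedSub_const (j := 0).1 (by simp [h])

theorem bInvariant_iInf_ker_d (n : ℕ) :
    ρ.BInvariant (⨅ (i : ℤ) (_ : (n : ℤ) ≤ i), LinearMap.ker (ρ.d i)) := by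
  intro m hm w hw
  simp only [Submodule.mem_iInf, LinearMap.mem_ker] at hw ⊢
  intro i hi
  simpa [hw i hi, hw (i + m) (by omega)] using
    LinearMap.congr_fun (ρ.comm i m (by omega) (by omega)) w

theorem isTrivial_of_d_eq_zero_of_le {n : ℕ} (h : ∀ i : ℤ, (n : ℤ) ≤ i → ρ.d i = 0) :
    ρ.IsTrivial := by
  intro i hi
  rcases le_total i n with hin | hin
  · refine Int.leInductionDown (motive := fun i _ => -1 ≤ i → ρ.d i = 0)
      (fun _ => h n le_rfl) (fun i _ ih hi => ?_) i hin hi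
    refine d_eq_zero_of_commute hi ?_
    rw [sub_add_cancel, ih (by omega)]
    exact Commute.zero_right _
  · exact h i hin

theorem InO.isTrivial_of_actSimple_one (hO : ρ.InO) {a b : ℂ}
    (hL : ActSimple (ρ.Lact 1 a b)) : ρ.IsTrivial := by
  obtain ⟨f, hf⟩ := hL.1
  obtain ⟨j, hj⟩ := DFunLike.ne_iff.1 hf
  obtain ⟨n, hn⟩ := hO (f j)
  refine isTrivial_of_d_eq_zero_of_le (n := n) fun i hi => ?_
  rcases (bInvariant_iInf_ker_d n).eq_bot_or_eq_top hO hL with h | h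
  · refine absurd ((Submodule.eq_bot_iff _).1 h (f j) ?_) hj
    simpa [Submodule.mem_iInf] using hn
  · exact LinearMap.ker_eq_top.1 (top_le_iff.1 (h.symm.le.trans (iInf₂_le i hi)))

end WittRep

end ActSimpleOne

section ParityPolynomials

/-- The polynomials with the parity of `e`: even if `e` is even, odd if `e` is odd. -/
noncomputable def parityPoly (e : ℤ) : Submodule ℂ ℂ[X] :=
  LinearMap.ker ((aeval (-X : ℂ[X])).toLinearMap - (-1 : ℂ) ^ e • LinearMap.id)

theorem mem_parityPoly {e : ℤ} {p : ℂ[X]} :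
    p ∈ parityPoly e ↔ p.comp (-X) = (-1 : ℂ) ^ e • p := by
  simp [parityPoly, sub_eq_zero, comp_eq_aeval]

theorem parityPoly_eq_of_even_sub {e e' : ℤ} (h : Even (e - e')) :
    parityPoly e = parityPoly e' := by
  rw [parityPoly, parityPoly, ← sub_add_cancel e e', zpow_add₀ (by norm_num), h.neg_one_zpow,
    one_mul]

theorem one_mem_parityPoly {e : ℤ} (he : Even e) : (1 : ℂ[X]) ∈ parityPoly e := by
  simp [mem_parityPoly, he.neg_one_zpow]

theorem mul_mem_parityPoly {e e' : ℤ} {p q : ℂ[X]} (hp : p ∈ parityPoly e)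
    (hq : q ∈ parityPoly e') : p * q ∈ parityPoly (e + e') := by
  rw [mem_parityPoly] at hp hq ⊢
  rw [mul_comp, hp, hq, smul_mul_smul_comm, zpow_add₀ (by norm_num)]

theorem X_mem_parityPoly : (X : ℂ[X]) ∈ parityPoly 1 := by
  simp [mem_parityPoly]

theorem coeff_comp_neg_X {R : Type*} [CommRing R] (p : R[X]) (n : ℕ) :
    (p.comp (-X)).coeff n = (-1) ^ n * p.coeff n := by
  rw [← neg_one_mul, ← C_1, ← C_neg, comp_C_mul_X_coeff, mul_comm]

theorem even_sub_of_coeff_ne_zero {e : ℤ} {p : ℂ[X]} (hp : p ∈ parityPoly e) {n : ℕ}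
    (hn : p.coeff n ≠ 0) : Even (e - n) := by
  have h := congrArg (coeff · n) (mem_parityPoly.1 hp)
  simp only [coeff_comp_neg_X, coeff_smul, smul_eq_mul] at h
  have hpow := mul_right_cancel₀ hn h
  by_contra hodd
  have h1 := (Int.not_even_iff_odd.1 hodd).neg_one_zpow (α := ℂ)
  rw [zpow_sub₀ (by norm_num), ← hpow, zpow_natCast, div_self (pow_ne_zero _ (by norm_num))] at h1
  norm_num at h1

theorem exists_eq_expand_two_of_even {e : ℤ} (he : Even e) {p : ℂ[X]} (hp : p ∈ parityPoly e) :
    ∃ r : ℂ[X], p = expand ℂ 2 r := by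
  refine ⟨contract 2 p, ?_⟩
  ext n
  rw [coeff_expand two_pos]
  split_ifs with h
  · rw [coeff_contract two_ne_zero, Nat.div_mul_cancel h]
  · by_contra hn
    have hen := he.sub (even_sub_of_coeff_ne_zero hp hn)
    rw [sub_sub_cancel, Int.even_coe_nat] at hen
    exact h hen.two_dvd

theorem exists_eq_X_mul_expand_two_of_odd {e : ℤ} (he : Odd e) {p : ℂ[X]}
    (hp : p ∈ parityPoly e) : ∃ r : ℂ[X], p = X * expand ℂ 2 r := by
  have h0 : p.coeff 0 = 0 := by
    by_contra h
    exact Int.not_even_iff_odd.2 he (by simpa using even_sub_of_coeff_ne_zero hp h)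
  obtain ⟨q, rfl⟩ := X_dvd_iff.2 h0
  have hq : q ∈ parityPoly (e + 1) := by
    rw [mem_parityPoly] at hp ⊢
    refine mul_left_cancel₀ (neg_ne_zero.2 (X_ne_zero (R := ℂ))) ?_
    rw [mul_comp, X_comp] at hp
    rw [hp, zpow_add₀ (by norm_num), zpow_one, mul_neg_one, neg_smul, neg_mul_neg, mul_smul_comm]
  obtain ⟨r, rfl⟩ := exists_eq_expand_two_of_even he.add_one hq
  exact ⟨r, rfl⟩

/-- The action of `d_k` on `L(W, -1, a, b' + 1)` for a highest weight module `W` of highest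
weight `b'`, in the polynomial coordinate of `hwVec`; `s` is the `d₀`-weight of the source. -/
noncomputable def hwAct (b' s : ℂ) (k : ℤ) (p : ℂ[X]) : ℂ[X] :=
  C ((-1) ^ k) * (X + C ((s + k) / 2 + k * b')) * p.comp (X - C ((k : ℂ) / 2)) -
    (X - C ((s + k) / 2 + k * b')) * p.comp (X + C ((k : ℂ) / 2))

theorem hwAct_mem_parityPoly (b' s : ℂ) (k : ℤ) {e : ℤ} {p : ℂ[X]} (hp : p ∈ parityPoly e) :
    hwAct b' s k p ∈ parityPoly (k + e) := by
  rw [mem_parityPoly] at hp ⊢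
  have h₁ : p.comp (-X - C ((k : ℂ) / 2)) = (-1 : ℂ) ^ e • p.comp (X + C ((k : ℂ) / 2)) := by
    rw [← smul_comp, ← hp, comp_assoc, neg_comp, X_comp, neg_add']
  have h₂ : p.comp (-X + C ((k : ℂ) / 2)) = (-1 : ℂ) ^ e • p.comp (X - C ((k : ℂ) / 2)) := by
    rw [← smul_comp, ← hp, comp_assoc, neg_comp, X_comp, neg_sub', sub_neg_eq_add]
  have hk : (C ((-1 : ℂ) ^ k)) * C ((-1 : ℂ) ^ k) = (1 : ℂ[X]) := by
    rw [← C_mul, ← mul_zpow, neg_one_mul, neg_neg, one_zpow, C_1]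
  simp only [hwAct, sub_comp, mul_comp, add_comp, X_comp, C_comp, comp_assoc, h₁, h₂,
    smul_eq_C_mul, zpow_add₀ (show (-1 : ℂ) ≠ 0 by norm_num), C_mul]
  linear_combination (-C ((-1 : ℂ) ^ e) * (X + C ((s + k) / 2 + k * b')) *
    p.comp (X - C ((k : ℂ) / 2))) * hk

theorem hwAct_one_one (b' s : ℂ) : hwAct b' s 1 1 = (-2 : ℂ) • X := by
  rw [smul_eq_C_mul]
  refine Polynomial.funext fun x => ?_
  simp [hwAct]
  ring

theorem natDegree_X_add_C_mul_comp {R : Type*} [CommRing R] {p : R[X]} (hp : p ≠ 0) (c r : R) :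
    ((X + C c) * p.comp (X + C r)).natDegree = p.natDegree + 1 := by
  have : Nontrivial R := nontrivial_iff.1 ⟨p, 0, hp⟩
  have hr : taylor r p ≠ 0 := (taylor_injective r).ne_iff' (map_zero _) |>.2 hp
  rw [← taylor_apply, (monic_X_add_C c).natDegree_mul' hr, natDegree_X_add_C, natDegree_taylor,
    add_comm]

theorem leadingCoeff_X_add_C_mul_comp {R : Type*} [CommRing R] (p : R[X]) (c r : R) :
    ((X + C c) * p.comp (X + C r)).leadingCoeff = p.leadingCoeff := by
  rw [leadingCoeff_monic_mul (monic_X_add_C c), ← taylor_apply, leadingCoeff_taylor]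

theorem natDegree_hwAct_one (b' s : ℂ) {p : ℂ[X]} (hp : p ≠ 0) :
    (hwAct b' s 1 p).natDegree = p.natDegree + 1 := by
  obtain ⟨c, c', r, r', h⟩ : ∃ c c' r r' : ℂ, hwAct b' s 1 p =
      -((X + C c) * p.comp (X + C r)) - (X + C c') * p.comp (X + C r') := by
    refine ⟨(s + 1) / 2 + b', -((s + 1) / 2 + b'), -(1 / 2), 1 / 2, ?_⟩
    simp only [hwAct, zpow_one, Int.cast_one, one_mul, C_neg, C_1, sub_eq_add_neg]
    ring
  have hcoeff (c r : ℂ) :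
      ((X + C c) * p.comp (X + C r)).coeff (p.natDegree + 1) = p.leadingCoeff := by
    rw [← natDegree_X_add_C_mul_comp hp c r, coeff_natDegree, leadingCoeff_X_add_C_mul_comp]
  rw [h]
  refine natDegree_eq_of_le_of_coeff_ne_zero ?_ ?_
  · refine (natDegree_sub_le _ _).trans ?_
    rw [natDegree_neg, natDegree_X_add_C_mul_comp hp, natDegree_X_add_C_mul_comp hp, max_self]
  · rw [coeff_sub, coeff_neg, hcoeff, hcoeff, ← neg_add', ← two_mul]
    simpa using hp

theorem degree_sub_smul_lt {K : Type*} [Field K] {p q : K[X]} (hp : p ≠ 0) (hq : q ≠ 0)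
    (h : q.natDegree = p.natDegree) :
    (p - (p.leadingCoeff / q.leadingCoeff) • q).degree < p.degree := by
  have hp' := leadingCoeff_ne_zero.2 hp
  have hq' := leadingCoeff_ne_zero.2 hq
  rw [smul_eq_C_mul]
  refine degree_sub_lt_left ?_ hp ?_
  · rw [degree_C_mul (div_ne_zero hp' hq'), degree_eq_natDegree hp, degree_eq_natDegree hq, h]
  · rw [leadingCoeff_mul, leadingCoeff_C, div_mul_cancel₀ _ hq']

end ParityPolynomials

section HighestWeight

theorem map_aeval_of_mem {R V V' : Type*} [CommSemiring R] [AddCommMonoid V] [Module R V]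
    [AddCommMonoid V'] [Module R V'] {A : Module.End R V} {A' : Module.End R V'} {T : V →ₗ[R] V'}
    {S : Submodule R V} (hA : ∀ x ∈ S, A x ∈ S) (h : ∀ x ∈ S, T (A x) = A' (T x))
    (r : R[X]) {x : V} (hx : x ∈ S) : T (aeval A r x) = aeval A' r (T x) := by
  induction r using Polynomial.induction_on' generalizing x with
  | add p q hp hq => simp only [map_add, LinearMap.add_apply, hp hx, hq hx]
  | monomial n c =>
    induction n generalizing x with
    | zero => simp [Module.algebraMap_end_apply]
    | succ n ih =>
      rw [← monomial_mul_X, map_mul, map_mul, aeval_X, aeval_X, Module.End.mul_apply,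
        Module.End.mul_apply, ih (hA x hx), h x hx]

theorem map_aeval {R V V' : Type*} [CommSemiring R] [AddCommMonoid V] [Module R V]
    [AddCommMonoid V'] [Module R V'] {A : Module.End R V} {A' : Module.End R V'} {T : V →ₗ[R] V'}
    (h : ∀ x, T (A x) = A' (T x)) (r : R[X]) (x : V) : T (aeval A r x) = aeval A' r (T x) :=
  map_aeval_of_mem (S := ⊤) (fun _ _ => trivial) (fun x _ => h x) r trivial

namespace WittRep

variable {W : Type*} [AddCommGroup W] [Module ℂ W] {ρ : WittRep W} {w₀ : W} {b' : ℂ}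

theorem d_add_one_mul_d_neg_one {n : ℤ} (hn : -1 ≤ n) :
    ρ.d (n + 1) * ρ.d (-1) = ρ.d (-1) * ρ.d (n + 1) - ((n : ℂ) + 2) • ρ.d n := by
  have h := ρ.comm (n + 1) (-1) (by omega) le_rfl
  rw [add_neg_cancel_right] at h
  push_cast at h
  simp only [Module.End.mul_eq_comp]
  linear_combination (norm := module) h

theorem InO.EEnd_mul_d_neg_one (hO : ρ.InO) (k : ℤ) :
    hO.EEnd k * ρ.d (-1) = (ρ.d (-1) - (k : Module.End ℂ W)) * hO.EEnd k := by
  ext w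
  obtain ⟨n, hn⟩ := hO.locallyFinite w
  obtain ⟨n', hn'⟩ := hO.locallyFinite (ρ.d (-1) w)
  have hterm (i : ℕ) : ((k : ℂ) ^ (i + 1) / (i + 1).factorial) •
      ρ.d (((i + 1 : ℕ) : ℤ) - 1) (ρ.d (-1) w) =
      ρ.d (-1) (((k : ℂ) ^ (i + 1) / (i + 1).factorial) • ρ.d (((i + 1 : ℕ) : ℤ) - 1) w) -
        (k : ℂ) • ((k : ℂ) ^ i / i.factorial) • ρ.d ((i : ℤ) - 1) w := by
    have h := LinearMap.congr_fun (ρ.d_add_one_mul_d_neg_one (n := (i : ℤ) - 1) (by omega)) w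
    have hi : ((i + 1 : ℕ) : ℤ) - 1 = (i : ℤ) - 1 + 1 := by omega
    have hf : (i.factorial : ℂ) ≠ 0 := by exact_mod_cast i.factorial_ne_zero
    have hi' : (i : ℂ) + 1 ≠ 0 := by exact_mod_cast i.succ_ne_zero
    simp only [Module.End.mul_apply, LinearMap.sub_apply, LinearMap.smul_apply] at h
    rw [hi, h, map_smul, smul_sub, smul_smul, smul_smul, Nat.factorial_succ]
    congr 2
    push_cast
    field_simp
    ring
  have hsum := fun {u : W} {m : ℕ} =>
    expSeries_apply_eq_sum hO.locallyFinite 0 k (w := u) (n := m)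
  simp only [add_zero] at hsum
  rw [Module.End.mul_apply, Module.End.mul_apply, LinearMap.sub_apply,
    Module.End.intCast_apply, ← Int.cast_smul_eq_zsmul ℂ, InO.EEnd,
    hsum (m := n' + n + 1) fun i hi => hn' i (by omega), Finset.sum_range_succ']
  nth_rw 1 [hsum (m := n' + n + 1) fun i hi => hn i (by omega)]
  rw [hsum (m := n' + n) fun i hi => hn i (by omega), map_sum, Finset.sum_range_succ',
    Finset.smul_sum, add_sub_right_comm, ← Finset.sum_sub_distrib,
    Finset.sum_congr rfl fun i _ => hterm i]
  simp

/-- The vector `p(d/dt - d₀ / 2) (w₀ ⊗ t^j)`. -/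
noncomputable def hwVec (ρ : WittRep W) (a : ℂ) (w₀ : W) (j : ℤ) : ℂ[X] →ₗ[ℂ] (ℤ →₀ W) :=
  LinearMap.applyₗ (Finsupp.single j w₀) ∘ₗ (aeval (ρ.centeredD a)).toLinearMap

theorem hwVec_apply (a : ℂ) (j : ℤ) (p : ℂ[X]) :
    ρ.hwVec a w₀ j p = aeval (ρ.centeredD a) p (Finsupp.single j w₀) := rfl

@[simp]
theorem hwVec_one (a : ℂ) (j : ℤ) : ρ.hwVec a w₀ j 1 = Finsupp.single j w₀ := by
  simp [hwVec_apply]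

theorem aeval_centeredD_hwVec (a : ℂ) (j : ℤ) (r p : ℂ[X]) :
    aeval (ρ.centeredD a) r (ρ.hwVec a w₀ j p) = ρ.hwVec a w₀ j (r * p) := by
  rw [hwVec_apply, hwVec_apply, map_mul, Module.End.mul_apply]

theorem commute_degreeEnd_centeredD (a : ℂ) : Commute (degreeEnd W a) (ρ.centeredD a) :=
  (commute_coeffEnd_degreeEnd _ a).symm.sub_right ((Commute.refl _).smul_right _)

theorem degreeEnd_hwVec (a : ℂ) (j : ℤ) (p : ℂ[X]) :
    degreeEnd W a (ρ.hwVec a w₀ j p) = (a + j) • ρ.hwVec a w₀ j p := by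
  have h := map_aeval (T := degreeEnd W a) (A := ρ.centeredD a) (A' := ρ.centeredD a)
    (LinearMap.congr_fun (commute_degreeEnd_centeredD (ρ := ρ) a).eq) p (Finsupp.single j w₀)
  rw [hwVec_apply, h, degreeEnd_single, map_smul]

theorem hwVec_apply_of_ne (a : ℂ) {i j : ℤ} (h : i ≠ j) (p : ℂ[X]) :
    ρ.hwVec a w₀ j p i = 0 := by
  have hi := DFunLike.congr_fun (degreeEnd_hwVec (ρ := ρ) (w₀ := w₀) a j p) i
  rw [degreeEnd_apply, Finsupp.smul_apply, ← sub_eq_zero, ← sub_smul,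
    add_sub_add_left_eq_sub] at hi
  refine (smul_eq_zero.1 hi).resolve_left (sub_ne_zero.2 ?_)
  exact_mod_cast h

theorem coeffEnd_d_add_one_mul_centeredD (a : ℂ) {n : ℤ} (hn : -1 ≤ n) :
    coeffEnd W (ρ.d (n + 1)) * ρ.centeredD a =
      ρ.centeredD a * coeffEnd W (ρ.d (n + 1)) - ((n : ℂ) + 2) • coeffEnd W (ρ.d n) := by
  rw [centeredD, mul_sub, sub_mul, ← map_mul, d_add_one_mul_d_neg_one hn, map_sub, map_mul,
    map_smul, mul_smul_comm, smul_mul_assoc, (commute_coeffEnd_degreeEnd _ a).eq]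
  abel

theorem IsHW.coeffEnd_d_centeredD_pow_of_lt (hw : ρ.IsHW w₀ b') (a : ℂ) (j : ℤ) {n k : ℕ}
    (h : k < n) : coeffEnd W (ρ.d n) ((ρ.centeredD a ^ k) (Finsupp.single j w₀)) = 0 := by
  induction k generalizing n with
  | zero => simp [hw.2.2 n (by omega)]
  | succ k ih =>
    obtain ⟨m, rfl⟩ : ∃ m, n = m + 1 := ⟨n - 1, by omega⟩
    rw [pow_succ', ← Module.End.mul_apply, ← mul_assoc, Nat.cast_succ,
      coeffEnd_d_add_one_mul_centeredD a (by omega)]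
    have h₁ := ih (n := m + 1) (by omega)
    have h₂ := ih (n := m) (by omega)
    push_cast at h₁
    simp [h₁, h₂]

theorem IsHW.coeffEnd_d_centeredD_pow (hw : ρ.IsHW w₀ b') (a : ℂ) (j : ℤ) (n : ℕ) :
    coeffEnd W (ρ.d n) ((ρ.centeredD a ^ n) (Finsupp.single j w₀)) =
      ((-1) ^ n * ((n + 1).factorial : ℂ) * b') • Finsupp.single j w₀ := by
  induction n with
  | zero => simp [hw.2.1]
  | succ n ih =>
    have h := hw.coeffEnd_d_centeredD_pow_of_lt a j n.lt_succ_self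
    rw [Nat.cast_succ] at h
    rw [pow_succ', ← Module.End.mul_apply, ← mul_assoc, Nat.cast_succ,
      coeffEnd_d_add_one_mul_centeredD a (by omega)]
    simp only [sub_mul, LinearMap.sub_apply, Module.End.mul_apply, h, map_zero, smul_mul_assoc,
      LinearMap.smul_apply, ih, Nat.factorial_succ (n + 1)]
    push_cast
    module

theorem IsHW.hwVec_injective (hw : ρ.IsHW w₀ b') (hb : b' ≠ 0) (a : ℂ) (j : ℤ) :
    Function.Injective (ρ.hwVec a w₀ j) := by
  refine (injective_iff_map_eq_zero _).2 fun p hp => ?_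
  by_contra h0
  have h := congrArg (coeffEnd W (ρ.d p.natDegree)) hp
  rw [hwVec_apply, aeval_eq_sum_range, LinearMap.sum_apply, map_sum, Finset.sum_range_succ,
    Finset.sum_eq_zero fun i hi => ?_, zero_add, map_zero, LinearMap.smul_apply, map_smul,
    hw.coeffEnd_d_centeredD_pow, smul_smul] at h
  · have hf : ((p.natDegree + 1).factorial : ℂ) ≠ 0 := by
      exact_mod_cast Nat.factorial_ne_zero _
    simp [hf, hb, h0, hw.1] at h
  · rw [LinearMap.smul_apply, map_smul,
      hw.coeffEnd_d_centeredD_pow_of_lt a j (Finset.mem_range.1 hi), smul_zero]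

theorem tShift_mul_centeredD (a : ℂ) (k : ℤ) :
    tShift W k * ρ.centeredD a =
      (ρ.centeredD a + algebraMap ℂ _ ((k : ℂ) / 2)) * tShift W k := by
  ext j w : 2
  simp only [LinearMap.comp_apply, Finsupp.lsingle_apply, Module.End.mul_apply, tShift_single,
    centeredD_single, LinearMap.add_apply, Module.algebraMap_end_apply, Finsupp.smul_single,
    ← Finsupp.single_add]
  congr 1
  push_cast
  module

theorem InO.coeffEnd_EEnd_mul_centeredD (hO : ρ.InO) (a : ℂ) (k : ℤ) :
    coeffEnd W (hO.EEnd k) * ρ.centeredD a =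
      (ρ.centeredD a - algebraMap ℂ _ (k : ℂ)) * coeffEnd W (hO.EEnd k) := by
  rw [centeredD, mul_sub, mul_smul_comm, ← map_mul, hO.EEnd_mul_d_neg_one, sub_mul, sub_mul,
    sub_mul, smul_mul_assoc, (commute_coeffEnd_degreeEnd _ a).eq, map_sub, map_mul, map_mul,
    map_intCast, map_intCast]
  abel

theorem tShift_hwVec (a : ℂ) (k j : ℤ) (p : ℂ[X]) :
    tShift W k (ρ.hwVec a w₀ j p) = ρ.hwVec a w₀ (k + j) (p.comp (X + C ((k : ℂ) / 2))) := by
  have h := map_aeval (T := tShift W k) (A := ρ.centeredD a)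
    (A' := ρ.centeredD a + algebraMap ℂ _ ((k : ℂ) / 2))
    (LinearMap.congr_fun (tShift_mul_centeredD a k)) p (Finsupp.single j w₀)
  rw [hwVec_apply, h, tShift_single, hwVec_apply, aeval_comp, map_add, aeval_X, aeval_C]

theorem IsHW.EEnd_apply (hw : ρ.IsHW w₀ b') (hO : ρ.InO) (k : ℤ) :
    hO.EEnd k w₀ = ρ.d (-1) w₀ + ((k : ℂ) * b') • w₀ := by
  rw [InO.EEnd, expSeries_apply_eq_sum _ 0 k (n := 2) fun i hi => hw.2.2 _ (by omega)]
  simp [Finset.sum_range_succ, hw.2.1, smul_smul]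

theorem IsHW.coeffEnd_EEnd_hwVec (hw : ρ.IsHW w₀ b') (hO : ρ.InO) (a : ℂ) (k j : ℤ) (p : ℂ[X]) :
    coeffEnd W (hO.EEnd k) (ρ.hwVec a w₀ j p) =
      ρ.hwVec a w₀ j (p.comp (X - C (k : ℂ)) * (X + C ((a + j) / 2 + k * b'))) := by
  have h := map_aeval (T := coeffEnd W (hO.EEnd k)) (A := ρ.centeredD a)
    (A' := ρ.centeredD a - algebraMap ℂ _ (k : ℂ))
    (LinearMap.congr_fun (hO.coeffEnd_EEnd_mul_centeredD a k)) p (Finsupp.single j w₀)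
  have h₁ : Finsupp.single j (hO.EEnd k w₀) =
      ρ.hwVec a w₀ j (X + C ((a + j) / 2 + k * b')) := by
    rw [hw.EEnd_apply, hwVec_apply, map_add, aeval_X, aeval_C, LinearMap.add_apply,
      centeredD_single, Module.algebraMap_end_apply, Finsupp.smul_single, ← Finsupp.single_add]
    congr 1
    module
  rw [hwVec_apply, h, coeffEnd_single, h₁, ← aeval_centeredD_hwVec, aeval_comp, map_sub, aeval_X,
    aeval_C]

theorem coeffEnd_d_neg_one_hwVec (a : ℂ) (j : ℤ) (p : ℂ[X]) :
    coeffEnd W (ρ.d (-1)) (ρ.hwVec a w₀ j p) =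
      ρ.hwVec a w₀ j ((X + C ((a + j) / 2)) * p) := by
  rw [add_mul, map_add, ← smul_eq_C_mul, map_smul, ← aeval_centeredD_hwVec, aeval_X, centeredD,
    LinearMap.sub_apply, LinearMap.smul_apply, degreeEnd_hwVec]
  module

theorem IsHW.LEnd_hwVec (hw : ρ.IsHW w₀ b') (hO : ρ.InO) (a : ℂ) (k j : ℤ) (p : ℂ[X]) :
    hO.LEnd (-1) a (b' + 1) k (ρ.hwVec a w₀ j p) =
      ρ.hwVec a w₀ (k + j) (hwAct b' (a + j) k p) := by
  rw [InO.LEnd, gradedEnd, Module.End.mul_apply]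
  simp only [map_add, map_sub, map_smul, map_intCast, LinearMap.add_apply, LinearMap.sub_apply,
    LinearMap.smul_apply, Module.End.intCast_apply, ← Int.cast_smul_eq_zsmul ℂ,
    hw.coeffEnd_EEnd_hwVec, coeffEnd_d_neg_one_hwVec, degreeEnd_hwVec, tShift_hwVec]
  simp only [← map_smul, ← map_add, ← map_sub]
  congr 1
  refine Polynomial.funext fun x => ?_
  have hx : x + (k : ℂ) / 2 - k = x - k / 2 := by ring
  simp only [hwAct, eval_add, eval_sub, eval_mul, eval_smul, eval_comp, eval_X, eval_C,
    eval_intCast, smul_eq_mul, hx]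
  ring

end WittRep

end HighestWeight

section ParityGraded

namespace WittRep

variable {W : Type*} [AddCommGroup W] [Module ℂ W] {ρ : WittRep W} {w₀ : W} {b' : ℂ}

/-- The span of the vectors `p(d/dt - d₀ / 2) (w₀ ⊗ t^j)` where `p` has the parity of `j - ε`.
For `ε = 0, 1` this is `L₀(a, b')`, `L₁(a, b')`. -/
noncomputable def parityGraded (ρ : WittRep W) (a : ℂ) (w₀ : W) (ε : ℤ) :
    Submodule ℂ (ℤ →₀ W) :=
  ⨆ j : ℤ, (parityPoly (j - ε)).map (ρ.hwVec a w₀ j)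

theorem hwVec_mem_parityGraded {a : ℂ} {ε j : ℤ} {p : ℂ[X]} (hp : p ∈ parityPoly (j - ε)) :
    ρ.hwVec a w₀ j p ∈ ρ.parityGraded a w₀ ε :=
  Submodule.mem_iSup_of_mem j (Submodule.mem_map_of_mem hp)

theorem parityGraded_le_iff {a : ℂ} {ε : ℤ} {S : Submodule ℂ (ℤ →₀ W)} :
    ρ.parityGraded a w₀ ε ≤ S ↔ ∀ j, ∀ p ∈ parityPoly (j - ε), ρ.hwVec a w₀ j p ∈ S :=
  iSup_le_iff.trans (forall_congr' fun _ => Submodule.map_le_iff_le_comap)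

theorem IsHW.LEnd_mem_parityGraded (hw : ρ.IsHW w₀ b') (hO : ρ.InO) {a : ℂ} {ε : ℤ} (k : ℤ)
    {f : ℤ →₀ W} (hf : f ∈ ρ.parityGraded a w₀ ε) :
    hO.LEnd (-1) a (b' + 1) k f ∈ ρ.parityGraded a w₀ ε := by
  refine parityGraded_le_iff (S := (ρ.parityGraded a w₀ ε).comap _) |>.2 (fun j p hp => ?_) hf
  rw [Submodule.mem_comap, hw.LEnd_hwVec]
  refine hwVec_mem_parityGraded ?_
  rw [add_sub_assoc]
  exact hwAct_mem_parityPoly _ _ _ hp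

theorem IsHW.degreeEnd_mem_parityGraded (hw : ρ.IsHW w₀ b') (hO : ρ.InO) {a : ℂ} {ε : ℤ}
    {f : ℤ →₀ W} (hf : f ∈ ρ.parityGraded a w₀ ε) :
    degreeEnd W a f ∈ ρ.parityGraded a w₀ ε := by
  simpa only [InO.LEnd_zero] using hw.LEnd_mem_parityGraded hO 0 hf

theorem centeredD_sq_hwVec (a : ℂ) (j : ℤ) (p : ℂ[X]) :
    (ρ.centeredD a ^ 2) (ρ.hwVec a w₀ j p) = ρ.hwVec a w₀ j (X ^ 2 * p) := by
  rw [← aeval_centeredD_hwVec, map_pow, aeval_X]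

theorem aeval_centeredD_sq_hwVec (a : ℂ) (j : ℤ) (r p : ℂ[X]) :
    aeval (ρ.centeredD a ^ 2) r (ρ.hwVec a w₀ j p) = ρ.hwVec a w₀ j (expand ℂ 2 r * p) := by
  rw [← aeval_centeredD_hwVec, expand_aeval]

theorem centeredD_sq_mem_parityGraded {a : ℂ} {ε : ℤ} {f : ℤ →₀ W}
    (hf : f ∈ ρ.parityGraded a w₀ ε) : (ρ.centeredD a ^ 2) f ∈ ρ.parityGraded a w₀ ε := by
  refine parityGraded_le_iff (S := (ρ.parityGraded a w₀ ε).comap _) |>.2 (fun j p hp => ?_) hf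
  rw [Submodule.mem_comap, centeredD_sq_hwVec, pow_two]
  refine hwVec_mem_parityGraded ?_
  rw [← parityPoly_eq_of_even_sub (e := 1 + 1 + (j - ε)) (by simp)]
  exact mul_mem_parityPoly (mul_mem_parityPoly X_mem_parityPoly X_mem_parityPoly) hp

theorem single_hwVec_apply (a : ℂ) (j : ℤ) (p : ℂ[X]) :
    Finsupp.single j (ρ.hwVec a w₀ j p j) = ρ.hwVec a w₀ j p := by
  ext i
  by_cases h : i = j
  · simp [h]
  · rw [Finsupp.single_eq_of_ne h, hwVec_apply_of_ne a h]

theorem exists_hwVec_eq_single {a : ℂ} {ε : ℤ} {f : ℤ →₀ W} (hf : f ∈ ρ.parityGraded a w₀ ε)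
    (j : ℤ) : ∃ p ∈ parityPoly (j - ε), ρ.hwVec a w₀ j p = Finsupp.single j (f j) := by
  refine parityGraded_le_iff (S := ((parityPoly (j - ε)).map (ρ.hwVec a w₀ j)).comap
    (Finsupp.lsingle j ∘ₗ Finsupp.lapply j)) |>.2 (fun i p hp => ?_) hf
  rw [Submodule.mem_comap, LinearMap.comp_apply, Finsupp.lsingle_apply, Finsupp.lapply_apply]
  rcases eq_or_ne j i with rfl | h
  · rw [single_hwVec_apply]
    exact Submodule.mem_map_of_mem hp
  · rw [hwVec_apply_of_ne a h, Finsupp.single_zero]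
    exact zero_mem _

theorem exists_eq_hwVec_of_degreeEnd_eq {a : ℂ} {ε j : ℤ} {f : ℤ →₀ W}
    (hf : f ∈ ρ.parityGraded a w₀ ε) (hj : degreeEnd W a f = (a + j) • f) :
    ∃ p ∈ parityPoly (j - ε), f = ρ.hwVec a w₀ j p := by
  obtain ⟨p, hp, hpf⟩ := exists_hwVec_eq_single hf j
  refine ⟨p, hp, ?_⟩
  rw [hpf]
  ext i
  rcases eq_or_ne i j with rfl | hij
  · simp
  · rw [Finsupp.single_eq_of_ne hij]
    by_contra hi
    exact hij (by exact_mod_cast add_left_cancel (eq_add_of_degreeEnd_eq hj hi).symm)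

theorem exists_eq_hwVec_of_ne_zero {a c : ℂ} {ε : ℤ} {f : ℤ →₀ W}
    (hf : f ∈ ρ.parityGraded a w₀ ε) (hf0 : f ≠ 0) (hc : degreeEnd W a f = c • f) :
    ∃ j : ℤ, c = a + j ∧ ∃ p ∈ parityPoly (j - ε), f = ρ.hwVec a w₀ j p := by
  obtain ⟨j, hj⟩ := DFunLike.ne_iff.1 hf0
  obtain rfl := eq_add_of_degreeEnd_eq hc hj
  exact ⟨j, rfl, exists_eq_hwVec_of_degreeEnd_eq hf hc⟩

theorem IsHW.exists_LEnd_one_pow_single (hw : ρ.IsHW w₀ b') (hO : ρ.InO) (a : ℂ) (n : ℕ)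
    (j : ℤ) : ∃ q ∈ parityPoly n, q ≠ 0 ∧ q.natDegree = n ∧
      (hO.LEnd (-1) a (b' + 1) 1 ^ n) (Finsupp.single j w₀) = ρ.hwVec a w₀ (n + j) q := by
  induction n with
  | zero => exact ⟨1, one_mem_parityPoly (by simp), one_ne_zero, natDegree_one, by simp⟩
  | succ n ih =>
    obtain ⟨q, hq, hq0, hqn, h⟩ := ih
    have hdeg := natDegree_hwAct_one b' (a + (n + j : ℤ)) hq0
    have hne : hwAct b' (a + (n + j : ℤ)) 1 q ≠ 0 := ne_zero_of_natDegree_gt (n := n) (by omega)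
    refine ⟨_, ?_, hne, by omega, ?_⟩
    · rw [Nat.cast_succ, add_comm]
      exact hwAct_mem_parityPoly _ _ _ hq
    · rw [pow_succ', Module.End.mul_apply, h, hw.LEnd_hwVec, ← add_assoc, add_comm 1,
        Nat.cast_succ]

theorem IsHW.span_LEnd_one_pow_single (hw : ρ.IsHW w₀ b') (hO : ρ.InO) (a : ℂ) (ε : ℤ) :
    Submodule.span ℂ {g | ∃ (i : ℕ) (j : ℤ),
      g = (hO.LEnd (-1) a (b' + 1) 1 ^ i) (Finsupp.single (2 * j + ε) w₀)} =
      ρ.parityGraded a w₀ ε := by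
  refine le_antisymm (Submodule.span_le.2 ?_) (parityGraded_le_iff.2 fun j p hp => ?_)
  · rintro _ ⟨n, j, rfl⟩
    obtain ⟨q, hq, -, -, h⟩ := hw.exists_LEnd_one_pow_single hO a n (2 * j + ε)
    rw [h]
    refine hwVec_mem_parityGraded ?_
    rwa [parityPoly_eq_of_even_sub (e' := n) ⟨j, by ring⟩]
  · induction hn : p.degree using WellFoundedLT.induction generalizing p with
    | ind _ ih =>
      rcases eq_or_ne p 0 with rfl | hp0
      · rw [map_zero]
        exact zero_mem _
      obtain ⟨i, hi⟩ := even_sub_of_coeff_ne_zero hp (leadingCoeff_ne_zero.2 hp0)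
      obtain ⟨q, hq, hq0, hqn, h⟩ := hw.exists_LEnd_one_pow_single hO a p.natDegree (2 * i + ε)
      have hj : (p.natDegree : ℤ) + (2 * i + ε) = j := by linarith
      rw [parityPoly_eq_of_even_sub (e' := j - ε) ⟨-i, by linarith⟩] at hq
      set c := p.leadingCoeff / q.leadingCoeff
      rw [← sub_add_cancel p (c • q), map_add, map_smul, ← hj, ← h, hj]
      exact add_mem (ih _ (hn ▸ degree_sub_smul_lt hp0 hq0 hqn) _
        (sub_mem hp (Submodule.smul_mem _ c hq)) rfl)
        (Submodule.smul_mem _ c (Submodule.subset_span ⟨_, i, rfl⟩))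

theorem IsHW.Lzero_eq_parityGraded (hw : ρ.IsHW w₀ b') (hO : ρ.InO) (a : ℂ) :
    ρ.Lzero a b' w₀ = ρ.parityGraded a w₀ 0 := by
  simp only [← hw.span_LEnd_one_pow_single hO, Lzero, Module.End.pow_apply, add_zero,
    funext (hO.LEnd_apply _ _ _ _)]

theorem IsHW.Lone_eq_parityGraded (hw : ρ.IsHW w₀ b') (hO : ρ.InO) (a : ℂ) :
    ρ.Lone a b' w₀ = ρ.parityGraded a w₀ 1 := by
  simp only [← hw.span_LEnd_one_pow_single hO, Lone, Module.End.pow_apply,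
    funext (hO.LEnd_apply _ _ _ _)]

end WittRep

end ParityGraded

section NonIsomorphism

variable {B W W' : Type*} [AddCommGroup B] [Module ℂ B] [AddCommGroup W] [Module ℂ W]
  [AddCommGroup W'] [Module ℂ W'] {ρB : BRep B} {ρ : WittRep W} {ρ' : WittRep W'}

theorem sq_apply_of_apply_eq_aeval_sq {R V : Type*} [CommSemiring R] [AddCommMonoid V]
    [Module R V] {A : Module.End R V} {r : R[X]} {x : V} (h : A x = aeval (A ^ 2) r x) :
    (A ^ 2) x = aeval (A ^ 2) (r * r) x := by
  have hcomm : A * aeval (A ^ 2) r = aeval (A ^ 2) r * A := by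
    simpa [expand_aeval] using congrArg (aeval A) (mul_comm X (expand R 2 r))
  calc (A ^ 2) x = A (A x) := by rw [pow_two, Module.End.mul_apply]
    _ = A (aeval (A ^ 2) r x) := by rw [h]
    _ = aeval (A ^ 2) r (A x) := LinearMap.congr_fun hcomm x
    _ = aeval (A ^ 2) (r * r) x := by rw [h, map_mul, Module.End.mul_apply]

namespace WittRep

theorem InO.isTrivial_of_intertwines_NEnd (hO : ρ.InO) (hOB : ρB.InO) {lam : ℂ} (hlam : lam ≠ 0)
    (hlam₁ : lam ≠ 1) {a b a₀ c : ℂ} {Ψ : (ℤ →₀ W) →ₗ[ℂ] (ℤ →₀ B)} (hΨ : Function.Injective Ψ)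
    (h : ∀ k f, Ψ (hO.LEnd lam a b k f) = hOB.NEnd a₀ c k (Ψ f)) : ρ.IsTrivial := by
  refine hO.isTrivial_of_mem_expPoly hlam a b hΨ (Set.mem_singleton 1) hlam₁
    (by simpa using hlam₁) fun v => ?_
  simp only [Module.End.mul_apply, h]
  exact polyFun_le_expPoly (Set.mem_singleton 1) (hOB.NEnd_neg_mul_NEnd_mem_polyEnd a₀ c (Ψ v))

theorem InO.isTrivial_of_intertwines_LEnd_neg_one (hO : ρ.InO) (hO' : ρ'.InO) {lam : ℂ}
    (hlam : lam ≠ 0) (hlam₁ : lam ≠ 1) (hlam₂ : lam ≠ -1) {a b a' b' : ℂ}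
    {Ψ : (ℤ →₀ W) →ₗ[ℂ] (ℤ →₀ W')} (hΨ : Function.Injective Ψ)
    (h : ∀ k f, Ψ (hO.LEnd lam a b k f) = hO'.LEnd (-1) a' b' k (Ψ f)) : ρ.IsTrivial := by
  refine hO.isTrivial_of_mem_expPoly hlam a b hΨ (s := {1, -1}) (by simp) (by simp [hlam₁, hlam₂])
    (by simp [hlam₁, inv_eq_iff_eq_inv, hlam₂]) fun v => ?_
  simp only [Module.End.mul_apply, h]
  simpa using hO'.LEnd_neg_mul_LEnd_mem_expPoly (by norm_num : (-1 : ℂ) ≠ 0) a' b' (Ψ v)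

theorem IsHW.range_ne_parityGraded {w' : W'} {b' : ℂ} (hw' : ρ'.IsHW w' b') (hb' : b' ≠ 0)
    (hO : ρ.InO) (hO' : ρ'.InO) {a b a' : ℂ} {Ψ : (ℤ →₀ W) →ₗ[ℂ] (ℤ →₀ W')}
    (hΨ : Function.Injective Ψ)
    (h : ∀ k f, Ψ (hO.LEnd (-1) a b k f) = hO'.LEnd (-1) a' (b' + 1) k (Ψ f)) (ε : ℤ) :
    LinearMap.range Ψ ≠ ρ'.parityGraded a' w' ε := by
  intro hrange
  have hsq (f) : Ψ ((ρ.centeredD a ^ 2) f) = (ρ'.centeredD a' ^ 2) (Ψ f) :=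
    hO.map_centeredD_sq hO' (b := b) (b' := b' + 1) Ψ f fun m => by
      simp only [Module.End.mul_apply, h]
  have hdeg (f) : Ψ (degreeEnd W a f) = degreeEnd W' a' (Ψ f) := by
    simpa only [InO.LEnd_zero] using h 0 f
  obtain ⟨u, hu⟩ : ∃ u, Ψ u = ρ'.hwVec a' w' ε 1 := by
    rw [← LinearMap.mem_range, hrange]
    exact hwVec_mem_parityGraded (one_mem_parityPoly (by simp))
  have hdegu : degreeEnd W a u = (a' + ε) • u := hΨ (by
    rw [hdeg, hu, degreeEnd_hwVec, map_smul, hu])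
  obtain ⟨p, hp, hpu⟩ := exists_eq_hwVec_of_degreeEnd_eq (j := ε)
    (hrange ▸ LinearMap.mem_range_self Ψ (ρ.centeredD a u)) (by
      rw [← hdeg, ← Module.End.mul_apply, (commute_degreeEnd_centeredD a).eq,
        Module.End.mul_apply, hdegu, map_smul, map_smul])
  obtain ⟨r, rfl⟩ := exists_eq_expand_two_of_even (by simp) hp
  have hr (q : ℂ[X]) : Ψ (aeval (ρ.centeredD a ^ 2) q u) = ρ'.hwVec a' w' ε (expand ℂ 2 q) := by
    rw [map_aeval hsq, hu, aeval_centeredD_sq_hwVec, mul_one]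
  have hMu : ρ.centeredD a u = aeval (ρ.centeredD a ^ 2) r u := hΨ (by rw [hpu, hr])
  -- `d/dt - d₀ / 2` acts on all of `L(W, -1, a, b)`, so its square `X` would have a square root.
  have hX : (X : ℂ[X]) = r * r := by
    refine expand_injective two_pos (hw'.hwVec_injective hb' a' ε ?_)
    rw [← hr, ← hr, ← sq_apply_of_apply_eq_aeval_sq hMu, aeval_X]
  exact irreducible_X.not_isSquare ⟨r, hX⟩

theorem IsHW.single_notMem_range_of_intertwines_NEnd {w' : W'} {b' : ℂ} (hw' : ρ'.IsHW w' b')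
    (hb' : b' ≠ 0) (hO' : ρ'.InO) (hOB : ρB.InO) {a₀ c a' : ℂ} {Ψ : (ℤ →₀ B) →ₗ[ℂ] (ℤ →₀ W')}
    (h : ∀ k f, Ψ (hOB.NEnd a₀ c k f) = hO'.LEnd (-1) a' (b' + 1) k (Ψ f)) (j : ℤ) :
    Finsupp.single j w' ∉ LinearMap.range Ψ := by
  rintro ⟨u, hu⟩
  have hpoly : (fun m : ℤ => (LinearMap.id : Module.End ℂ (ℤ →₀ W'))
      ((hO'.LEnd (-1) a' (b' + 1) (-m) * hO'.LEnd (-1) a' (b' + 1) m) (Finsupp.single j w'))) ∈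
      expPoly (ℤ →₀ W') {1} := by
    simp only [LinearMap.id_apply, Module.End.mul_apply, ← hu, ← h]
    exact polyFun_le_expPoly (Set.mem_singleton 1)
      (map_mem_polyFun Ψ (hOB.NEnd_neg_mul_NEnd_mem_polyEnd a₀ c u))
  have hsq := hO'.four_smul_centeredD_sq_apply (by norm_num) a' (b' + 1) Function.injective_id
    (Set.mem_singleton 1) (by norm_num) (by norm_num) hpoly
  rw [← hwVec_one a' j, centeredD_sq_hwVec, mul_one, pow_two (degreeEnd W' a'),
    Module.End.mul_apply, degreeEnd_hwVec, map_smul, degreeEnd_hwVec, ← map_smul, ← map_smul,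
    ← map_smul] at hsq
  simpa [coeff_one] using congrArg (coeff · 2) (hw'.hwVec_injective hb' a' j hsq)

theorem IsHW.map_aeval_centeredD_sq {w₀ : W} {b₀ : ℂ} (hw : ρ.IsHW w₀ b₀) (hO : ρ.InO)
    (hO' : ρ'.InO) {a a' b' : ℂ} {ε : ℤ} {Ψ : (ℤ →₀ W) →ₗ[ℂ] (ℤ →₀ W')}
    (h : ∀ k, ∀ f ∈ ρ.parityGraded a w₀ ε,
      Ψ (hO.LEnd (-1) a (b₀ + 1) k f) = hO'.LEnd (-1) a' b' k (Ψ f))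
    (r : ℂ[X]) {f : ℤ →₀ W} (hf : f ∈ ρ.parityGraded a w₀ ε) :
    Ψ (aeval (ρ.centeredD a ^ 2) r f) = aeval (ρ'.centeredD a' ^ 2) r (Ψ f) := by
  refine map_aeval_of_mem (fun _ => centeredD_sq_mem_parityGraded) (fun g hg =>
    hO.map_centeredD_sq hO' (b := b₀ + 1) (b' := b') Ψ g fun m => ?_) r hf
  simp only [Module.End.mul_apply, h _ _ hg, h _ _ (hw.LEnd_mem_parityGraded hO m hg)]

theorem IsHW.map_hwVec_X_mul_expand_two {w₀ : W} {w' : W'} {b₀ b' : ℂ} (hw : ρ.IsHW w₀ b₀)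
    (hw' : ρ'.IsHW w' b') (hO : ρ.InO) (hO' : ρ'.InO) {a a' : ℂ} {ε i : ℤ}
    {Ψ : (ℤ →₀ W) →ₗ[ℂ] (ℤ →₀ W')}
    (h : ∀ k, ∀ f ∈ ρ.parityGraded a w₀ ε,
      Ψ (hO.LEnd (-1) a (b₀ + 1) k f) = hO'.LEnd (-1) a' (b' + 1) k (Ψ f))
    {p : ℂ[X]} (hp : Ψ (ρ.hwVec a w₀ ε 1) = ρ'.hwVec a' w' i p) (r : ℂ[X]) :
    (-2 : ℂ) • Ψ (ρ.hwVec a w₀ (1 + ε) (X * expand ℂ 2 r)) =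
      ρ'.hwVec a' w' (1 + i) (expand ℂ 2 r * hwAct b' (a' + i) 1 p) := by
  have hX : ρ.hwVec a w₀ (1 + ε) X ∈ ρ.parityGraded a w₀ ε :=
    hwVec_mem_parityGraded (by simpa using X_mem_parityPoly)
  have hΨX : (-2 : ℂ) • Ψ (ρ.hwVec a w₀ (1 + ε) X) =
      ρ'.hwVec a' w' (1 + i) (hwAct b' (a' + i) 1 p) := by
    rw [← hw'.LEnd_hwVec hO', ← hp, ← h _ _ (hwVec_mem_parityGraded (one_mem_parityPoly (by simp))),
      hw.LEnd_hwVec, hwAct_one_one, map_smul, map_smul]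
  rw [mul_comm, ← aeval_centeredD_sq_hwVec, hw.map_aeval_centeredD_sq hO hO' h r hX, ← map_smul,
    hΨX, aeval_centeredD_sq_hwVec]

theorem IsHW.map_parityGraded_ne {w₀ : W} {w' : W'} {b₀ b' : ℂ} (hw : ρ.IsHW w₀ b₀)
    (hw' : ρ'.IsHW w' b') (hb' : b' ≠ 0) (hO : ρ.InO) (hO' : ρ'.InO) {a a' : ℂ} {ε ε' : ℤ}
    (hne : ∀ n : ℤ, a + ε ≠ a' + (2 * n + ε')) {Ψ : (ℤ →₀ W) →ₗ[ℂ] (ℤ →₀ W')}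
    (hΨ : Set.InjOn Ψ (ρ.parityGraded a w₀ ε))
    (h : ∀ k, ∀ f ∈ ρ.parityGraded a w₀ ε,
      Ψ (hO.LEnd (-1) a (b₀ + 1) k f) = hO'.LEnd (-1) a' (b' + 1) k (Ψ f)) :
    (ρ.parityGraded a w₀ ε).map Ψ ≠ ρ'.parityGraded a' w' ε' := by
  intro hmap
  have hdeg (f) (hf : f ∈ ρ.parityGraded a w₀ ε) :
      Ψ (degreeEnd W a f) = degreeEnd W' a' (Ψ f) := by
    simpa only [InO.LEnd_zero] using h 0 f hf
  have hone : ρ.hwVec a w₀ ε 1 ∈ ρ.parityGraded a w₀ ε :=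
    hwVec_mem_parityGraded (one_mem_parityPoly (by simp))
  have hΨone : Ψ (ρ.hwVec a w₀ ε 1) ≠ 0 := fun h0 => by
    simpa [hw.1] using hΨ hone (zero_mem _) (h0.trans (map_zero Ψ).symm)
  obtain ⟨i, hi, p, -, hp⟩ := exists_eq_hwVec_of_ne_zero
    (hmap ▸ Submodule.mem_map_of_mem hone) hΨone (c := a + ε) (by
      rw [← hdeg _ hone, degreeEnd_hwVec, map_smul])
  have hodd : Odd (i - ε') := by
    rw [← Int.not_even_iff_odd]
    rintro ⟨n, hn⟩
    refine hne n (hi.trans ?_)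
    rw [← sub_add_cancel i ε', hn]
    push_cast
    ring
  have hp0 : p ≠ 0 := fun h0 => hΨone (by rw [hp, h0, map_zero])
  obtain ⟨f, hf, hfv⟩ : ∃ f ∈ ρ.parityGraded a w₀ ε, Ψ f = ρ'.hwVec a' w' (1 + i) 1 := by
    rw [← Submodule.mem_map, hmap]
    exact hwVec_mem_parityGraded (one_mem_parityPoly (by rw [add_sub_assoc]; exact hodd.one_add))
  obtain ⟨q, hq, rfl⟩ := exists_eq_hwVec_of_degreeEnd_eq (j := 1 + ε) hf <| by
    refine hΨ (hw.degreeEnd_mem_parityGraded hO hf) (Submodule.smul_mem _ _ hf) ?_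
    rw [hdeg f hf, map_smul, hfv, degreeEnd_hwVec]
    push_cast
    rw [add_left_comm, ← hi, add_left_comm]
  obtain ⟨r, rfl⟩ := exists_eq_X_mul_expand_two_of_odd (by simp) hq
  -- The vector hit by `w₀ ⊗ t^ε` is `p`, so `d₁` and the square of `d/dt - d₀ / 2` only produce
  -- multiples of `d₁ p`, which has positive degree.
  have hunit : C (-2) = expand ℂ 2 r * hwAct b' (a' + i) 1 p := by
    refine hw'.hwVec_injective hb' a' (1 + i) ?_
    rw [← hw.map_hwVec_X_mul_expand_two hw' hO hO' h hp, hfv, ← map_smul, smul_eq_C_mul, mul_one]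
  have hdeg₀ := natDegree_eq_zero_of_isUnit (isUnit_of_dvd_unit (Dvd.intro_left _ hunit.symm)
    (isUnit_C.2 (isUnit_iff_ne_zero.2 (by norm_num))))
  rw [natDegree_hwAct_one b' _ hp0] at hdeg₀
  exact Nat.succ_ne_zero _ hdeg₀

end WittRep

end NonIsomorphism

section ParityGradedIsomorphism

variable {B W W' : Type*} [AddCommGroup B] [Module ℂ B] [AddCommGroup W] [Module ℂ W]
  [AddCommGroup W'] [Module ℂ W'] {ρB : BRep B} {ρ : WittRep W} {ρ' : WittRep W'}

namespace WittRep

theorem IsHW.not_exists_LEnd_equiv_parityGraded {w' : W'} {b' : ℂ} (hw' : ρ'.IsHW w' b')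
    (hb' : b' ≠ 0) (hO : ρ.InO) (hO' : ρ'.InO) (hnt : ¬ ρ.IsTrivial) {lam : ℂ} (hlam : lam ≠ 0)
    (hlam₁ : lam ≠ 1) (a b a' : ℂ) (ε : ℤ) :
    ¬ ∃ φ : (ℤ →₀ W) ≃ₗ[ℂ] ρ'.parityGraded a' w' ε, ∀ k f,
      (φ (ρ.Lact lam a b k f) : ℤ →₀ W') = ρ'.Lact (-1) a' (b' + 1) k (φ f) := by
  rintro ⟨φ, h⟩
  have hinj : Function.Injective ((ρ'.parityGraded a' w' ε).subtype ∘ₗ φ.toLinearMap) :=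
    Subtype.val_injective.comp φ.injective
  simp only [← hO.LEnd_apply, ← hO'.LEnd_apply] at h
  rcases eq_or_ne lam (-1) with rfl | hlam₂
  · exact hw'.range_ne_parityGraded hb' hO hO' hinj h ε
      ((LinearEquiv.range_comp _ _).trans (Submodule.range_subtype _))
  · exact hnt (hO.isTrivial_of_intertwines_LEnd_neg_one hO' hlam hlam₁ hlam₂ hinj h)

theorem IsHW.not_exists_NEnd_equiv_parityGraded {w' : W'} {b' : ℂ} (hw' : ρ'.IsHW w' b')
    (hb' : b' ≠ 0) (hOB : ρB.InO) (hO' : ρ'.InO) (a₀ c a' : ℂ) (ε : ℤ) :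
    ¬ ∃ φ : (ℤ →₀ B) ≃ₗ[ℂ] ρ'.parityGraded a' w' ε, ∀ k f,
      (φ (ρB.Nact a₀ c k f) : ℤ →₀ W') = ρ'.Lact (-1) a' (b' + 1) k (φ f) := by
  rintro ⟨φ, h⟩
  simp only [← hOB.NEnd_apply, ← hO'.LEnd_apply] at h
  refine hw'.single_notMem_range_of_intertwines_NEnd hb' hO' hOB
    (Ψ := (ρ'.parityGraded a' w' ε).subtype ∘ₗ φ.toLinearMap) h ε ?_
  rw [LinearEquiv.range_comp, Submodule.range_subtype, ← hwVec_one a' ε]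
  exact hwVec_mem_parityGraded (one_mem_parityPoly (by simp))

theorem IsHW.not_exists_parityGraded_equiv {w₀ : W} {w' : W'} {b₀ b' : ℂ} (hw : ρ.IsHW w₀ b₀)
    (hw' : ρ'.IsHW w' b') (hb' : b' ≠ 0) (hO : ρ.InO) (hO' : ρ'.InO) {a a' : ℂ} {ε ε' : ℤ}
    (hne : ∀ n : ℤ, a + ε ≠ a' + (2 * n + ε')) :
    ¬ ∃ φ : ρ.parityGraded a w₀ ε ≃ₗ[ℂ] ρ'.parityGraded a' w' ε', ∀ (k : ℤ)
      (u : ρ.parityGraded a w₀ ε)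
      (hu : ρ.Lact (-1) a (b₀ + 1) k u ∈ ρ.parityGraded a w₀ ε),
        (φ ⟨ρ.Lact (-1) a (b₀ + 1) k u, hu⟩ : ℤ →₀ W') =
          ρ'.Lact (-1) a' (b' + 1) k (φ u) := by
  rintro ⟨φ, h⟩
  simp only [← hO.LEnd_apply, ← hO'.LEnd_apply] at h
  obtain ⟨Ψ, hΨ⟩ := ((ρ'.parityGraded a' w' ε').subtype ∘ₗ φ.toLinearMap).exists_extend
  have hΨφ (u : ρ.parityGraded a w₀ ε) : Ψ u = φ u := LinearMap.congr_fun hΨ u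
  refine hw.map_parityGraded_ne hw' hb' hO hO' hne (Ψ := Ψ) (fun f hf g hg hfg => ?_)
    (fun k f hf => ?_) ?_
  · rw [hΨφ ⟨f, hf⟩, hΨφ ⟨g, hg⟩] at hfg
    exact congrArg Subtype.val (φ.injective (Subtype.val_injective hfg))
  · rw [hΨφ ⟨f, hf⟩, hΨφ ⟨_, hw.LEnd_mem_parityGraded hO k hf⟩]
    exact h k ⟨f, hf⟩ (hw.LEnd_mem_parityGraded hO k hf)
  · rw [← Submodule.range_subtype (ρ.parityGraded a w₀ ε), ← LinearMap.range_comp, hΨ,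
      LinearEquiv.range_comp, Submodule.range_subtype]

end WittRep

end ParityGradedIsomorphism

theorem ne_add_odd_of_re_mem_Ico {a a' : ℂ} (ha : a.re ∈ Set.Ico 0 1)
    (ha' : a'.re ∈ Set.Ico 0 1) (n : ℤ) : a ≠ a' + (2 * n + 1) := by
  intro h
  have hre : a.re = a'.re + ((2 * n + 1 : ℤ) : ℝ) := by
    simpa using congrArg Complex.re h
  have hlt : ((2 * n + 1 : ℤ) : ℝ) < 1 := by linarith [ha.2, ha'.1]
  have hgt : (-1 : ℝ) < ((2 * n + 1 : ℤ) : ℝ) := by linarith [ha.1, ha'.2]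
  norm_cast at hlt hgt
  omega

theorem stmt17_general {B W W₁ W₂ : Type*} [AddCommGroup B] [Module ℂ B]
    [AddCommGroup W] [Module ℂ W] [AddCommGroup W₁] [Module ℂ W₁]
    [AddCommGroup W₂] [Module ℂ W₂]
    {ρB : BRep B} (hOB : ρB.InO) {ρ : WittRep W} (hO : ρ.InO) (hnt : ¬ ρ.IsTrivial)
    {ρ₁ : WittRep W₁} (hO₁ : ρ₁.InO) {ρ₂ : WittRep W₂} (hO₂ : ρ₂.InO)
    {lam a a₀ a₁ a₂ b b₁ b₂ : ℂ} (hlam : lam ≠ 0) (hlam₁ : lam ≠ 1)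
    (ha : ∀ n : ℤ, a₁ ≠ a₂ + (2 * n + 1)) (hb₁ : b₁ ≠ 0) (hb₂ : b₂ ≠ 0)
    {w₁ : W₁} {w₂ : W₂} (hw₁ : ρ₁.IsHW w₁ b₁) (hw₂ : ρ₂.IsHW w₂ b₂) :
    (¬ ∃ φ : (ℤ →₀ W) ≃ₗ[ℂ] (ℤ →₀ B),
        ∀ (k : ℤ) (f : ℤ →₀ W), φ (ρ.Lact lam a b k f) = ρB.Nact a₀ 0 k (φ f)) ∧
    (¬ ∃ φ : (ℤ →₀ W) ≃ₗ[ℂ] ↥(ρ₁.Lzero a₁ b₁ w₁),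
        ∀ (k : ℤ) (f : ℤ →₀ W),
          (↑(φ (ρ.Lact lam a b k f)) : ℤ →₀ W₁) = ρ₁.Lact (-1) a₁ (b₁ + 1) k ↑(φ f)) ∧
    (¬ ∃ φ : (ℤ →₀ W) ≃ₗ[ℂ] ↥(ρ₂.Lone a₂ b₂ w₂),
        ∀ (k : ℤ) (f : ℤ →₀ W),
          (↑(φ (ρ.Lact lam a b k f)) : ℤ →₀ W₂) = ρ₂.Lact (-1) a₂ (b₂ + 1) k ↑(φ f)) ∧
    (¬ ∃ φ : (ℤ →₀ B) ≃ₗ[ℂ] ↥(ρ₁.Lzero a₁ b₁ w₁),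
        ∀ (k : ℤ) (f : ℤ →₀ B),
          (↑(φ (ρB.Nact a₀ 0 k f)) : ℤ →₀ W₁) = ρ₁.Lact (-1) a₁ (b₁ + 1) k ↑(φ f)) ∧
    (¬ ∃ φ : (ℤ →₀ B) ≃ₗ[ℂ] ↥(ρ₂.Lone a₂ b₂ w₂),
        ∀ (k : ℤ) (f : ℤ →₀ B),
          (↑(φ (ρB.Nact a₀ 0 k f)) : ℤ →₀ W₂) = ρ₂.Lact (-1) a₂ (b₂ + 1) k ↑(φ f)) ∧
    (¬ ∃ φ : ↥(ρ₁.Lzero a₁ b₁ w₁) ≃ₗ[ℂ] ↥(ρ₂.Lone a₂ b₂ w₂),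
        ∀ (k : ℤ) (u : ↥(ρ₁.Lzero a₁ b₁ w₁))
          (hu : ρ₁.Lact (-1) a₁ (b₁ + 1) k ↑u ∈ ρ₁.Lzero a₁ b₁ w₁),
          (↑(φ ⟨ρ₁.Lact (-1) a₁ (b₁ + 1) k ↑u, hu⟩) : ℤ →₀ W₂) =
            ρ₂.Lact (-1) a₂ (b₂ + 1) k ↑(φ u)) := by
  rw [hw₁.Lzero_eq_parityGraded hO₁, hw₂.Lone_eq_parityGraded hO₂]
  refine ⟨?_, ?_, ?_, ?_, ?_, ?_⟩
  · rintro ⟨φ, h⟩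
    simp only [← hO.LEnd_apply, ← hOB.NEnd_apply] at h
    exact hnt (hO.isTrivial_of_intertwines_NEnd hOB hlam hlam₁ (Ψ := φ.toLinearMap) φ.injective h)
  · exact hw₁.not_exists_LEnd_equiv_parityGraded hb₁ hO hO₁ hnt hlam hlam₁ a b a₁ 0
  · exact hw₂.not_exists_LEnd_equiv_parityGraded hb₂ hO hO₂ hnt hlam hlam₁ a b a₂ 1
  · exact hw₁.not_exists_NEnd_equiv_parityGraded hb₁ hOB hO₁ a₀ 0 a₁ 0
  · exact hw₂.not_exists_NEnd_equiv_parityGraded hb₂ hOB hO₂ a₀ 0 a₂ 1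
  · exact hw₁.not_exists_parityGraded_equiv hw₂ hb₂ hO₁ hO₂ (by simpa using ha)

theorem stmt17 {B W W₁ W₂ : Type*} [AddCommGroup B] [Module ℂ B]
    [AddCommGroup W] [Module ℂ W] [AddCommGroup W₁] [Module ℂ W₁]
    [AddCommGroup W₂] [Module ℂ W₂]
    (ρB : BRep B) (hOB : ρB.InO) (hsB : ρB.IsSimple) (hntB : ¬ ρB.IsTrivial)
    (ρ : WittRep W) (hO : ρ.InO) (hs : ρ.IsSimple) (hnt : ¬ ρ.IsTrivial)
    (ρ₁ : WittRep W₁) (hO₁ : ρ₁.InO) (hs₁ : ρ₁.IsSimple) (hnt₁ : ¬ ρ₁.IsTrivial)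
    (ρ₂ : WittRep W₂) (hO₂ : ρ₂.InO) (hs₂ : ρ₂.IsSimple) (hnt₂ : ¬ ρ₂.IsTrivial)
    (lam a a₀ a₁ a₂ b b₁ b₂ : ℂ) (hlam : lam ≠ 0)
    (ha : 0 ≤ a.re ∧ a.re < 1) (ha₀ : 0 ≤ a₀.re ∧ a₀.re < 1)
    (ha₁ : 0 ≤ a₁.re ∧ a₁.re < 1) (ha₂ : 0 ≤ a₂.re ∧ a₂.re < 1)
    (hb₁ : b₁ ≠ 0) (hb₂ : b₂ ≠ 0)
    (w₁ : W₁) (w₂ : W₂) (hw₁ : ρ₁.IsHW w₁ b₁) (hw₂ : ρ₂.IsHW w₂ b₂)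
    (hLs : ActSimple (ρ.Lact lam a b)) :
    (¬ ∃ φ : (ℤ →₀ W) ≃ₗ[ℂ] (ℤ →₀ B),
        ∀ (k : ℤ) (f : ℤ →₀ W), φ (ρ.Lact lam a b k f) = ρB.Nact a₀ 0 k (φ f)) ∧
    (¬ ∃ φ : (ℤ →₀ W) ≃ₗ[ℂ] ↥(ρ₁.Lzero a₁ b₁ w₁),
        ∀ (k : ℤ) (f : ℤ →₀ W),
          (↑(φ (ρ.Lact lam a b k f)) : ℤ →₀ W₁) = ρ₁.Lact (-1) a₁ (b₁ + 1) k ↑(φ f)) ∧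
    (¬ ∃ φ : (ℤ →₀ W) ≃ₗ[ℂ] ↥(ρ₂.Lone a₂ b₂ w₂),
        ∀ (k : ℤ) (f : ℤ →₀ W),
          (↑(φ (ρ.Lact lam a b k f)) : ℤ →₀ W₂) = ρ₂.Lact (-1) a₂ (b₂ + 1) k ↑(φ f)) ∧
    (¬ ∃ φ : (ℤ →₀ B) ≃ₗ[ℂ] ↥(ρ₁.Lzero a₁ b₁ w₁),
        ∀ (k : ℤ) (f : ℤ →₀ B),
          (↑(φ (ρB.Nact a₀ 0 k f)) : ℤ →₀ W₁) = ρ₁.Lact (-1) a₁ (b₁ + 1) k ↑(φ f)) ∧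
    (¬ ∃ φ : (ℤ →₀ B) ≃ₗ[ℂ] ↥(ρ₂.Lone a₂ b₂ w₂),
        ∀ (k : ℤ) (f : ℤ →₀ B),
          (↑(φ (ρB.Nact a₀ 0 k f)) : ℤ →₀ W₂) = ρ₂.Lact (-1) a₂ (b₂ + 1) k ↑(φ f)) ∧
    (¬ ∃ φ : ↥(ρ₁.Lzero a₁ b₁ w₁) ≃ₗ[ℂ] ↥(ρ₂.Lone a₂ b₂ w₂),
        ∀ (k : ℤ) (u : ↥(ρ₁.Lzero a₁ b₁ w₁))
          (hu : ρ₁.Lact (-1) a₁ (b₁ + 1) k ↑u ∈ ρ₁.Lzero a₁ b₁ w₁),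
          (↑(φ ⟨ρ₁.Lact (-1) a₁ (b₁ + 1) k ↑u, hu⟩) : ℤ →₀ W₂) =
            ρ₂.Lact (-1) a₂ (b₂ + 1) k ↑(φ u)) := by
  exact stmt17_general hOB hO hnt hO₁ hO₂ hlam
    (fun h => hnt (hO.isTrivial_of_actSimple_one (h ▸ hLs)))
    (ne_add_odd_of_re_mem_Ico ha₁ ha₂) hb₁ hb₂ hw₁ hw₂
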